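/- arXiv:1108.1247 — 6 statements merged into one kernel-verified Lean document; each statement's English description precedes it below -/
import Mathlib

section
/- Let k, s be positive integers with s ≥ k ≥ 4. Let F* ⊆ binom([n],k) be a (k,s)-homogeneous family with intersection pattern J, and suppose J has rank k, or J has rank k−1 and is of type 2. Then for every F ∈ F* there exist two distinct vertices u, v ∈ F such that {u} is the kernel of some s-star in F* and {v} is the kernel of some s-star in F*. -/
open Finset

/-- The finsets in `S` form an s-star (Δ-system) in `G` with kernel `A`:
`S` consists of `s` members of `G` whose pairwise intersections all equal `A`. -/
def IsStarWithKernel {α : Type*} [DecidableEq α] (G : Finset (Finset α)) (s : ℕ)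
    (A : Finset α) (S : Finset (Finset α)) : Prop :=
  S ⊆ G ∧ S.card = s ∧ ∀ E₁ ∈ S, ∀ E₂ ∈ S, E₁ ≠ E₂ → E₁ ∩ E₂ = A

/-- The pattern Π(S) of a set S relative to the partition (X_1, …, X_k):
the set of indices i with S ∩ X_i ≠ ∅. -/
def pattern {k n : ℕ} (X : Fin k → Finset (Fin n)) (S : Finset (Fin n)) : Finset (Fin k) :=
  Finset.univ.filter fun i => (S ∩ X i).Nonempty

/-- `G` is a (k,s)-homogeneous family with k-partition `X` and intersection pattern `J`:
`X` partitions the vertex set, every member of `G` is a k-set meeting each part in exactly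
one vertex, `J` is an intersection-closed family of proper subsets of [k], every member `F`
of `G` has Π(I(F,G)) = J, and every intersection `F ∩ F'` of distinct members is the kernel
of an s-star in `G` containing `F`. -/
def IsHomogeneous (k s : ℕ) {n : ℕ} (G : Finset (Finset (Fin n)))
    (X : Fin k → Finset (Fin n)) (J : Finset (Finset (Fin k))) : Prop :=
  (∀ v : Fin n, ∃! i : Fin k, v ∈ X i) ∧
  (∀ F ∈ G, F.card = k ∧ ∀ i : Fin k, (F ∩ X i).card = 1) ∧
  (∀ B ∈ J, B ≠ Finset.univ) ∧
  (∀ A ∈ J, ∀ B ∈ J, A ∩ B ∈ J) ∧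
  (∀ F ∈ G, (G.erase F).image (fun F' => pattern X (F ∩ F')) = J) ∧
  (∀ F ∈ G, ∀ F' ∈ G, F' ≠ F → ∃ S : Finset (Finset (Fin n)),
      IsStarWithKernel G s (F ∩ F') S ∧ F ∈ S)

/-- The rank of a family `L` of subsets of [k]: the minimum cardinality of a set
`D ⊆ [k]` contained in no member of `L`. -/
noncomputable def patRank (k : ℕ) (L : Finset (Finset (Fin k))) : ℕ :=
  sInf {p : ℕ | ∃ D : Finset (Fin k), D.card = p ∧ ∀ B ∈ L, ¬ D ⊆ B}

/-- A family `L` of proper subsets of [k] (of rank k-1) is of type 1 if there is an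
`x ∈ [k]` with `[k] ∖ {x} ∉ L` but `[k] ∖ {y} ∈ L` for every `y ≠ x`. -/
def IsType1 {k : ℕ} (L : Finset (Finset (Fin k))) : Prop :=
  ∃ x : Fin k, Finset.univ.erase x ∉ L ∧ ∀ y : Fin k, y ≠ x → Finset.univ.erase y ∈ L

lemma hom_single_mem {k : ℕ} (J : Finset (Finset (Fin k))) (hk : 4 ≤ k)
    (hI : ∀ A ∈ J, ∀ B ∈ J, A ∩ B ∈ J) (i : Fin k)
    (h : ∀ j, j ≠ i → ∃ B ∈ J, i ∈ B ∧ j ∉ B) : {i} ∈ J := by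
  have hne : ∃ j : Fin k, j ≠ i := by
    haveI : Nontrivial (Fin k) := Fin.nontrivial_iff_two_le.mpr (by omega)
    exact exists_ne i
  obtain ⟨j0, hj0⟩ := hne
  obtain ⟨B0, hB0, hi0, -⟩ := h j0 hj0
  have key : ∀ S : Finset (Fin k), i ∉ S → ∃ B ∈ J, i ∈ B ∧ ∀ j ∈ S, j ∉ B := by
    intro S
    induction S using Finset.induction_on with
    | empty => intro _; exact ⟨B0, hB0, hi0, by simp⟩
    | insert a S _ ih =>
      intro hi
      simp only [Finset.mem_insert, not_or] at hi
      obtain ⟨B, hB, hiB, hS⟩ := ih hi.2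
      obtain ⟨B', hB', hiB', ha⟩ := h a (Ne.symm hi.1)
      refine ⟨B ∩ B', hI _ hB _ hB', by simp [hiB, hiB'], ?_⟩
      intro j hj hjB
      rw [Finset.mem_inter] at hjB
      rcases Finset.mem_insert.mp hj with rfl | hj
      · exact ha hjB.2
      · exact hS j hj hjB.1
  obtain ⟨B, hB, hiB, hS⟩ := key (Finset.univ.erase i) (by simp)
  have : B = {i} := by
    ext j
    simp only [Finset.mem_singleton]
    constructor
    · intro hj
      by_contra hji
      exact hS j (by simp [hji]) hj
    · rintro rfl; exact hiB
  exact this ▸ hB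

lemma hom_rank_cover {k : ℕ} (J : Finset (Finset (Fin k))) (D : Finset (Fin k))
    (h : D.card < patRank k J) : ∃ B ∈ J, D ⊆ B := by
  by_contra hc
  push Not at hc
  exact Nat.notMem_of_lt_sInf h ⟨D, rfl, hc⟩

lemma hom_two_singles {k : ℕ} (J : Finset (Finset (Fin k))) (hk : 4 ≤ k)
    (hP : ∀ B ∈ J, B ≠ Finset.univ)
    (hI : ∀ A ∈ J, ∀ B ∈ J, A ∩ B ∈ J)
    (hJ : patRank k J = k ∨ (patRank k J = k - 1 ∧ ¬ IsType1 J)) :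
    ∃ i j : Fin k, i ≠ j ∧ {i} ∈ J ∧ {j} ∈ J := by
  have hr : k - 1 ≤ patRank k J := by omega
  have hpair : ∀ x y : Fin k, x ≠ y → ∃ B ∈ J, (∀ z, z ≠ x → z ≠ y → z ∈ B) := by
    intro x y hxy
    obtain ⟨B, hB, hs⟩ := hom_rank_cover J ((Finset.univ.erase x).erase y) (by
      rw [Finset.card_erase_of_mem (by simp [hxy.symm]), Finset.card_erase_of_mem (by simp)]
      simp; omega)
    exact ⟨B, hB, fun z h1 h2 => hs (by simp [h1, h2])⟩
  have hco : ∀ B ∈ J, ∀ x, (∀ z, z ≠ x → z ∈ B) → Finset.univ.erase x ∈ J := by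
    intro B hB x h
    have hx : x ∉ B := by
      intro hx
      apply hP B hB
      ext z
      by_cases hz : z = x
      · simp [hz, hx]
      · simp [h z hz]
    have : B = Finset.univ.erase x := by
      ext z
      by_cases hz : z = x
      · simp [hz, hx]
      · simp [h z hz, hz]
    exact this ▸ hB
  have hT1 : ¬ IsType1 J := by
    rcases hJ with h | h
    · rintro ⟨x, hx, -⟩
      obtain ⟨B, hB, hs⟩ := hom_rank_cover J (Finset.univ.erase x) (by
        rw [Finset.card_erase_of_mem (by simp)]; simp; omega)
      exact hx (hco B hB x fun z hz => hs (by simp [hz]))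
    · exact h.2
  have hUU : ∀ x y : Fin k, x ≠ y → Finset.univ.erase x ∉ J → Finset.univ.erase y ∉ J →
      ∃ B ∈ J, x ∉ B ∧ ∀ z, z ≠ x → z ≠ y → z ∈ B := by
    intro x y hxy hx hy
    obtain ⟨B, hB, h⟩ := hpair x y hxy
    refine ⟨B, hB, fun hxB => hy (hco B hB y ?_), h⟩
    intro z hz
    by_cases hzx : z = x
    · exact hzx ▸ hxB
    · exact h z hzx hz
  have hgood : ∀ i : Fin k, (∀ j, j ≠ i → Finset.univ.erase j ∉ J →
      ∃ j', j' ≠ j ∧ j' ≠ i ∧ Finset.univ.erase j' ∉ J) → {i} ∈ J := by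
    intro i h
    apply hom_single_mem J hk hI
    intro j hj
    by_cases hjT : Finset.univ.erase j ∈ J
    · exact ⟨_, hjT, by simp [hj.symm], by simp⟩
    · obtain ⟨j', h1, h2, h3⟩ := h j hj hjT
      obtain ⟨B, hB, hjB, h⟩ := hUU j j' h1.symm hjT h3
      exact ⟨B, hB, h i hj.symm h2.symm, hjB⟩
  let U : Finset (Fin k) := Finset.univ.filter fun x => Finset.univ.erase x ∉ J
  by_cases hU : 2 < U.card
  · obtain ⟨a, b, ha, hb, hab⟩ := Finset.one_lt_card_iff.mp (by omega : 1 < U.card)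
    have hg : ∀ i : Fin k, {i} ∈ J := by
      intro i
      apply hgood
      intro j _ _
      have : ∃ j' ∈ U, j' ∉ ({j, i} : Finset (Fin k)) :=
        Finset.exists_mem_notMem_of_card_lt_card (lt_of_le_of_lt Finset.card_le_two hU)
      obtain ⟨j', hj', hn⟩ := this
      simp only [Finset.mem_insert, Finset.mem_singleton, not_or] at hn
      exact ⟨j', hn.1, hn.2, (Finset.mem_filter.mp hj').2⟩
    exact ⟨a, b, hab, hg a, hg b⟩
  · have hc : 1 < Uᶜ.card := by rw [Finset.card_compl]; simp; omega
    obtain ⟨a, b, ha, hb, hab⟩ := Finset.one_lt_card_iff.mp hc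
    have hg : ∀ i ∈ Uᶜ, {i} ∈ J := by
      intro i hi
      have hiT : Finset.univ.erase i ∈ J := by simpa [U] using hi
      apply hgood
      intro j hj hjU
      by_contra hcon
      push Not at hcon
      refine hT1 ⟨j, hjU, fun y hy => ?_⟩
      by_cases hyi : y = i
      · exact hyi ▸ hiT
      · exact hcon y hy hyi
    exact ⟨a, b, hab, hg a ha, hg b hb⟩

lemma hom_kernel {k s n : ℕ} (G : Finset (Finset (Fin n))) (X : Fin k → Finset (Fin n))
    (J : Finset (Finset (Fin k))) (hG : IsHomogeneous k s G X J) (F : Finset (Fin n))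
    (hF : F ∈ G) (i : Fin k) (hi : {i} ∈ J) :
    ∃ u ∈ F, u ∈ X i ∧ ∃ S : Finset (Finset (Fin n)), IsStarWithKernel G s {u} S := by
  obtain ⟨hX, hc, -, -, him, hst⟩ := hG
  rw [← him F hF, Finset.mem_image] at hi
  obtain ⟨F', hF', hp⟩ := hi
  rw [Finset.mem_erase] at hF'
  have hmem : ∀ j, j ∈ pattern X (F ∩ F') ↔ j = i := by intro j; rw [hp]; simp
  simp only [pattern, Finset.mem_filter, Finset.mem_univ, true_and] at hmem
  obtain ⟨u, hu⟩ := (hmem i).mpr rfl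
  simp only [Finset.mem_inter] at hu
  have heq : F ∩ F' = {u} := by
    ext v
    rw [Finset.mem_singleton]
    constructor
    · intro hv
      obtain ⟨j, hj, -⟩ := hX v
      have : j = i := (hmem j).mp ⟨v, Finset.mem_inter.mpr ⟨hv, hj⟩⟩
      subst this
      exact Finset.card_le_one.mp ((hc F hF).2 j).le v
        (Finset.mem_inter.mpr ⟨(Finset.mem_inter.mp hv).1, hj⟩) u
        (Finset.mem_inter.mpr ⟨hu.1.1, hu.2⟩)
    · rintro rfl; exact Finset.mem_inter.mpr hu.1
  obtain ⟨S, hS, -⟩ := hst F hF F' hF'.2 hF'.1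
  exact ⟨u, hu.1.1, hu.2, S, heq ▸ hS⟩

/-- Corollary 3.6: if s ≥ k ≥ 4 and the intersection pattern J of a (k,s)-homogeneous family
has rank k, or has rank k-1 and is of type 2, then every member F contains two distinct
vertices u, v such that {u} and {v} are each the kernel of an s-star in the family. -/
theorem homogeneous_two_kernel_vertices (k s n : ℕ) (hk : 4 ≤ k) (hs : k ≤ s)
    (G : Finset (Finset (Fin n))) (X : Fin k → Finset (Fin n)) (J : Finset (Finset (Fin k)))
    (hG : IsHomogeneous k s G X J)
    (hJ : patRank k J = k ∨ (patRank k J = k - 1 ∧ ¬ IsType1 J)) :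
    ∀ F ∈ G, ∃ u ∈ F, ∃ v ∈ F, u ≠ v ∧
      (∃ S : Finset (Finset (Fin n)), IsStarWithKernel G s {u} S) ∧
      (∃ S : Finset (Finset (Fin n)), IsStarWithKernel G s {v} S) := by
  intro F hF
  obtain ⟨i, j, hij, hi, hj⟩ := hom_two_singles J hk hG.2.2.1 hG.2.2.2.1 hJ
  obtain ⟨u, hu, hui, hSu⟩ := hom_kernel G X J hG F hF i hi
  obtain ⟨v, hv, hvj, hSv⟩ := hom_kernel G X J hG F hF j hj
  refine ⟨u, hu, v, hv, ?_, hSu, hSv⟩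
  rintro rfl
  exact hij ((hG.1 u).unique hui hvj)
end

section
/- Let k, ℓ, s be positive integers with k ≥ 4 and s ≥ kℓ. There exists a positive constant c = c(k,s), depending only on k and s, with the following property: if F ⊆ binom([n],k) contains no copy of the k-uniform linear path P^{(k)}_ℓ, then F can be partitioned into subfamilies G_1,…,G_m, F_0 such that for each i ∈ [m], G_i is a (k,s)-homogeneous family whose intersection pattern J_i has rank k−1 and is of type 1, and |F_0| ≤ (1/c)·C(n,k−2). -/
open Finset

/-- The family `F` of k-sets contains a k-uniform linear path of length ℓ:
distinct members `P 0, …, P (ℓ-1)` with consecutive members meeting in exactly one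
vertex and non-consecutive members disjoint. -/
def ContainsLinearPath (k ℓ : ℕ) {n : ℕ} (F : Finset (Finset (Fin n))) : Prop :=
  ∃ P : Fin ℓ → Finset (Fin n), Function.Injective P ∧
    (∀ i, P i ∈ F) ∧ (∀ i, (P i).card = k) ∧
    (∀ i j : Fin ℓ, (i : ℕ) + 1 = (j : ℕ) → (P i ∩ P j).card = 1) ∧
    (∀ i j : Fin ℓ, (i : ℕ) + 1 < (j : ℕ) → P i ∩ P j = ∅)

/-- A rainbow set for the colouring. -/
def Rb {k n : ℕ} (χ : Fin n → Fin k) (F : Finset (Fin n)) : Prop :=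
  F.card = k ∧ Set.InjOn χ (F : Set (Fin n))

/-- F lies in an s-star of G whose kernel has pattern A. -/
def GoodAt {k n : ℕ} (s : ℕ) (χ : Fin n → Fin k) (G : Finset (Finset (Fin n)))
    (F : Finset (Fin n)) (A : Finset (Fin k)) : Prop :=
  ∃ (S : Finset (Finset (Fin n))) (K : Finset (Fin n)),
    IsStarWithKernel G s K S ∧ F ∈ S ∧ K.image χ = A

theorem GoodAt.mono {k n s : ℕ} {χ : Fin n → Fin k} {G H : Finset (Finset (Fin n))}
    {F : Finset (Fin n)} {A : Finset (Fin k)} (h : GoodAt s χ G F A) (hGH : G ⊆ H) :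
    GoodAt s χ H F A := by
  obtain ⟨S, K, ⟨h1, h2, h3⟩, h4, h5⟩ := h
  exact ⟨S, K, ⟨h1.trans hGH, h2, h3⟩, h4, h5⟩

theorem star_kernel_subset {α : Type*} [DecidableEq α] {G S : Finset (Finset α)} {s : ℕ}
    {K F : Finset α} (hs : 2 ≤ s) (h : IsStarWithKernel G s K S) (hF : F ∈ S) : K ⊆ F := by
  obtain ⟨h1, h2, h3⟩ := h
  obtain ⟨E, hE, hne⟩ := Finset.exists_mem_ne (by omega : 1 < S.card) F
  rw [← h3 E hE F hF hne]
  exact Finset.inter_subset_right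

theorem eq_of_image_eq {k n : ℕ} {χ : Fin n → Fin k} {F K L : Finset (Fin n)}
    (hF : Set.InjOn χ (F : Set (Fin n))) (hK : K ⊆ F) (hL : L ⊆ F)
    (h : K.image χ = L.image χ) : K = L := by
  ext v
  constructor
  · intro hv
    have : χ v ∈ L.image χ := h ▸ Finset.mem_image_of_mem χ hv
    obtain ⟨w, hw, he⟩ := Finset.mem_image.1 this
    have := hF (hL hw) (hK hv) he
    exact this ▸ hw
  · intro hv
    have : χ v ∈ K.image χ := h ▸ Finset.mem_image_of_mem χ hv
    obtain ⟨w, hw, he⟩ := Finset.mem_image.1 this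
    have := hF (hK hw) (hL hv) he
    exact this ▸ hw

theorem image_filter_eq {k n : ℕ} {χ : Fin n → Fin k} {F : Finset (Fin n)} (hF : Rb χ F)
    (A : Finset (Fin k)) : (F.filter (fun v => χ v ∈ A)).image χ = A := by
  have hu : F.image χ = Finset.univ := by
    apply Finset.eq_univ_of_card
    rw [Finset.card_image_of_injOn hF.2, hF.1, Fintype.card_fin]
  ext i
  simp only [Finset.mem_image, Finset.mem_filter]
  constructor
  · rintro ⟨v, ⟨_, h⟩, rfl⟩; exact h
  · intro hi
    have : i ∈ F.image χ := hu ▸ Finset.mem_univ i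
    obtain ⟨v, hv, rfl⟩ := Finset.mem_image.1 this
    exact ⟨v, ⟨hv, hi⟩, rfl⟩

/-- Deletion process. -/
theorem deletion {k n s : ℕ} (χ : Fin n → Fin k) (T : Finset (Finset (Fin k))) :
    ∀ (N : ℕ) (G : Finset (Finset (Fin n))), G.card = N →
      ∃ (H : Finset (Finset (Fin n))) (B : Finset (Fin k) → Finset (Finset (Fin n))),
        H ⊆ G ∧ (∀ F ∈ H, ∀ A ∈ T, GoodAt s χ H F A) ∧ (∀ A, B A ⊆ G) ∧
        G ⊆ H ∪ T.biUnion B ∧ (∀ A ∈ T, ∀ F ∈ B A, ¬ GoodAt s χ (B A) F A) := by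
  intro N
  induction N with
  | zero =>
    intro G hG
    rw [Finset.card_eq_zero] at hG
    subst hG
    exact ⟨∅, fun _ => ∅, by simp, by simp, by simp, by simp, by simp⟩
  | succ N ih =>
    intro G hG
    by_cases hst : ∀ F ∈ G, ∀ A ∈ T, GoodAt s χ G F A
    · exact ⟨G, fun _ => ∅, by simp, hst, by simp, by simp, by simp⟩
    push Not at hst
    obtain ⟨F, hF, A, hA, hbad⟩ := hst
    obtain ⟨H, B, h1, h2, h3, h4, h5⟩ := ih (G.erase F) (by rw [Finset.card_erase_of_mem hF]; omega)
    have hins : insert F (B A) ⊆ G := by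
      intro E hE
      rcases Finset.mem_insert.1 hE with rfl | hE
      · exact hF
      · exact Finset.erase_subset _ _ (h3 A hE)
    refine ⟨H, fun A' => if A' = A then insert F (B A) else B A', h1.trans (Finset.erase_subset _ _),
      h2, ?_, ?_, ?_⟩
    · intro A'
      dsimp only
      split_ifs
      · exact hins
      · exact (h3 A').trans (Finset.erase_subset _ _)
    · intro E hE
      by_cases hEF : E = F
      · apply Finset.mem_union_right
        rw [Finset.mem_biUnion]
        exact ⟨A, hA, by simp [hEF]⟩
      · rcases Finset.mem_union.1 (h4 (Finset.mem_erase.2 ⟨hEF, hE⟩)) with h | h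
        · exact Finset.mem_union_left _ h
        · apply Finset.mem_union_right
          rw [Finset.mem_biUnion] at h ⊢
          obtain ⟨A', hA', h⟩ := h
          refine ⟨A', hA', ?_⟩
          split_ifs with hc
          · subst hc; exact Finset.mem_insert_of_mem h
          · exact h
    · intro A' hA' E hE hgood
      by_cases hc : A' = A
      · subst hc
        simp only [if_true] at hE hgood
        obtain ⟨S, K, ⟨g1, g2, g3⟩, g4, g5⟩ := hgood
        by_cases hFS : F ∈ S
        · exact hbad ⟨S, K, ⟨g1.trans hins, g2, g3⟩, hFS, g5⟩
        · have hsub : S ⊆ B A' := fun x hx => by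
            rcases Finset.mem_insert.1 (g1 hx) with rfl | h
            · exact absurd hx hFS
            · exact h
          exact h5 A' hA' E (hsub g4) ⟨S, K, ⟨hsub, g2, g3⟩, g4, g5⟩
      · simp only [if_neg hc] at hE hgood
        exact h5 A' hA' E hE hgood

/-- One link class. -/
theorem kill_class {k n s : ℕ} (hs : 1 ≤ s)
    (B : Finset (Finset (Fin n))) (K : Finset (Fin n))
    (hB : ∀ F ∈ B, F.card = k ∧ K ⊆ F ∧ F ≠ K)
    (hno : ∀ S, ¬ IsStarWithKernel B s K S) :
    ∃ B' ⊆ B, B.card ≤ s * k * B'.card ∧ ∀ F ∈ B', ∀ F' ∈ B', F ∩ F' ≠ K := by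
  classical
  let fam := B.powerset.filter (fun S => ∀ E₁ ∈ S, ∀ E₂ ∈ S, E₁ ≠ E₂ → E₁ ∩ E₂ = K)
  have hne : fam.Nonempty := ⟨∅, by simp [fam]⟩
  obtain ⟨S, hS, hmax⟩ := Finset.exists_max_image fam Finset.card hne
  obtain ⟨hSB, hSK⟩ := Finset.mem_filter.1 hS
  rw [Finset.mem_powerset] at hSB
  have hcard : S.card ≤ s := by
    by_contra hlt
    push Not at hlt
    obtain ⟨S', hS', hc⟩ := Finset.exists_subset_card_eq hlt.le
    exact hno S' ⟨hS'.trans hSB, hc, fun a ha b hb => hSK a (hS' ha) b (hS' hb)⟩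
  let U := S.biUnion (fun F => F \ K)
  have hU : U.card ≤ s * k := by
    refine (Finset.card_biUnion_le_card_mul S _ k ?_).trans (Nat.mul_le_mul_right _ hcard)
    intro F hF
    exact (Finset.card_le_card Finset.sdiff_subset).trans (hB F (hSB hF)).1.le
  have hcov : ∀ F ∈ B, ∃ u ∈ U, u ∈ F := by
    intro F hF
    by_cases hFS : F ∈ S
    · obtain ⟨_, h2, h3⟩ := hB F hF
      obtain ⟨u, hu⟩ : (F \ K).Nonempty := by
        rw [Finset.sdiff_nonempty]
        exact fun h => h3 (h.antisymm h2)
      exact ⟨u, Finset.mem_biUnion.2 ⟨F, hFS, hu⟩, (Finset.mem_sdiff.1 hu).1⟩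
    · by_contra hcon
      push Not at hcon
      have key : ∀ E ∈ S, E ∩ F = K := by
        intro E hE
        apply Finset.Subset.antisymm
        · intro v hv
          obtain ⟨hv1, hv2⟩ := Finset.mem_inter.1 hv
          by_contra hvK
          exact hcon v (Finset.mem_biUnion.2 ⟨E, hE, Finset.mem_sdiff.2 ⟨hv1, hvK⟩⟩) hv2
        · exact Finset.subset_inter (hB E (hSB hE)).2.1 (hB F hF).2.1
      have : insert F S ∈ fam := by
        rw [Finset.mem_filter, Finset.mem_powerset]
        refine ⟨Finset.insert_subset hF hSB, ?_⟩
        intro a ha b hb hab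
        rcases Finset.mem_insert.1 ha with ha' | ha'
        · rcases Finset.mem_insert.1 hb with hb' | hb'
          · exact absurd (ha'.trans hb'.symm) hab
          · rw [Finset.inter_comm, ha']; exact key b hb'
        · rcases Finset.mem_insert.1 hb with hb' | hb'
          · rw [hb']; exact key a ha'
          · exact hSK a ha' b hb' hab
      have := hmax _ this
      rw [Finset.card_insert_of_notMem hFS] at this
      omega
  rcases B.eq_empty_or_nonempty with rfl | ⟨F0, hF0⟩
  · exact ⟨∅, by simp, by simp, by simp⟩
  obtain ⟨u0, hu0, _⟩ := hcov F0 hF0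
  obtain ⟨u, hu, humax⟩ := Finset.exists_max_image U (fun u => (B.filter (fun F => u ∈ F)).card) ⟨u0, hu0⟩
  refine ⟨B.filter (fun F => u ∈ F), Finset.filter_subset _ _, ?_, ?_⟩
  · have h1 : B ⊆ U.biUnion (fun u => B.filter (fun F => u ∈ F)) := by
      intro F hF
      obtain ⟨w, hw, hwF⟩ := hcov F hF
      exact Finset.mem_biUnion.2 ⟨w, hw, Finset.mem_filter.2 ⟨hF, hwF⟩⟩
    calc B.card ≤ _ := Finset.card_le_card h1
      _ ≤ U.card * (B.filter (fun F => u ∈ F)).card := Finset.card_biUnion_le_card_mul _ _ _ humax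
      _ ≤ _ := Nat.mul_le_mul_right _ hU
  · intro F hF F' hF' he
    have h1 := (Finset.mem_filter.1 hF).2
    have h2 := (Finset.mem_filter.1 hF').2
    obtain ⟨E, _, hE⟩ := Finset.mem_biUnion.1 hu
    exact (Finset.mem_sdiff.1 hE).2 (he ▸ Finset.mem_inter.2 ⟨h1, h2⟩)

theorem kill {k n s : ℕ} (hs : 1 ≤ s) (χ : Fin n → Fin k) (B : Finset (Finset (Fin n)))
    (hB : ∀ F ∈ B, Rb χ F) (A : Finset (Fin k)) (hA : A ≠ Finset.univ)
    (hno : ∀ F ∈ B, ¬ GoodAt s χ B F A) :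
    ∃ B' ⊆ B, B.card ≤ s * k * B'.card ∧
      ∀ F ∈ B', ∀ F' ∈ B', (F ∩ F').image χ ≠ A := by
  classical
  let r : Finset (Fin n) → Finset (Fin n) := fun F => F.filter (fun v => χ v ∈ A)
  have hr : ∀ F ∈ B, (r F).image χ = A := fun F hF => image_filter_eq (hB F hF) A
  have hrs : ∀ F, r F ⊆ F := fun F => Finset.filter_subset _ _
  have hcl : ∀ K : Finset (Fin n), ∃ B' ⊆ B.filter (fun F => r F = K),
      (B.filter (fun F => r F = K)).card ≤ s * k * B'.card ∧
        ∀ F ∈ B', ∀ F' ∈ B', F ∩ F' ≠ K := by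
    intro K
    apply kill_class hs
    · intro F hF
      obtain ⟨hF, hFK⟩ := Finset.mem_filter.1 hF
      refine ⟨(hB F hF).1, hFK ▸ hrs F, ?_⟩
      intro he
      rw [← hFK] at he
      apply hA
      rw [← hr F hF, ← he]
      apply Finset.eq_univ_of_card
      rw [Finset.card_image_of_injOn (hB F hF).2, (hB F hF).1, Fintype.card_fin]
    · rintro S ⟨h1, h2, h3⟩
      obtain ⟨F, hF⟩ : S.Nonempty := by rw [← Finset.card_pos]; omega
      obtain ⟨hFB, hFK⟩ := Finset.mem_filter.1 (h1 hF)
      exact hno F hFB ⟨S, K, ⟨h1.trans (Finset.filter_subset _ _), h2, h3⟩, hF, hFK ▸ hr F hFB⟩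
  choose sub hsub hcard hint using hcl
  refine ⟨(B.image r).biUnion sub, ?_, ?_, ?_⟩
  · intro F hF
    obtain ⟨K, _, hK⟩ := Finset.mem_biUnion.1 hF
    exact (Finset.mem_filter.1 (hsub K hK)).1
  · rw [Finset.card_biUnion]
    · rw [Finset.mul_sum, Finset.card_eq_sum_card_image r B]
      exact Finset.sum_le_sum fun K _ => hcard K
    · intro K _ L _ hKL
      refine Finset.disjoint_left.2 ?_
      intro F hF hF'
      exact hKL ((Finset.mem_filter.1 (hsub K hF)).2.symm.trans (Finset.mem_filter.1 (hsub L hF')).2)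
  · intro F hF F' hF' he
    obtain ⟨K, _, hK⟩ := Finset.mem_biUnion.1 hF
    obtain ⟨L, _, hL⟩ := Finset.mem_biUnion.1 hF'
    obtain ⟨hFB, hFK⟩ := Finset.mem_filter.1 (hsub K hK)
    obtain ⟨hFB', hFL⟩ := Finset.mem_filter.1 (hsub L hL)
    have e1 : F ∩ F' = K := by
      rw [← hFK]
      exact eq_of_image_eq (hB F hFB).2 Finset.inter_subset_left (hrs F) (by rw [he, hr F hFB])
    have e2 : F ∩ F' = L := by
      rw [← hFL]
      exact eq_of_image_eq (hB F' hFB').2 Finset.inter_subset_right (hrs F') (by rw [he, hr F' hFB'])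
    have : K = L := e1.symm.trans e2
    subst this
    exact hint K F hK F' hL e1

theorem main_iter (k s : ℕ) (hs : 1 ≤ s) : ∀ N : ℕ, ∃ C : ℕ, ∀ (n : ℕ) (χ : Fin n → Fin k)
    (T : Finset (Finset (Fin k))) (G : Finset (Finset (Fin n))), T.card = N →
    (∀ A ∈ T, A ≠ Finset.univ) → (∀ F ∈ G, Rb χ F) →
    (∀ F ∈ G, ∀ F' ∈ G, F ≠ F' → (F ∩ F').image χ ∈ T) →
    ∃ (H : Finset (Finset (Fin n))) (T' : Finset (Finset (Fin k))),
      H ⊆ G ∧ T' ⊆ T ∧ G.card ≤ C * H.card ∧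
      (∀ F ∈ H, ∀ F' ∈ H, F ≠ F' → (F ∩ F').image χ ∈ T') ∧
      (∀ F ∈ H, ∀ A ∈ T', GoodAt s χ H F A) := by
  intro N
  induction N with
  | zero =>
    refine ⟨1, ?_⟩
    intro n χ T G hT hTu hG hI
    rw [Finset.card_eq_zero] at hT
    subst hT
    exact ⟨G, ∅, subset_rfl, subset_rfl, by simp, hI, by simp⟩
  | succ N ih =>
    obtain ⟨C, hC⟩ := ih
    refine ⟨(N + 2) + (N + 2) * (s * k) * C, ?_⟩
    intro n χ T G hT hTu hG hI
    obtain ⟨H, B, h1, h2, h3, h4, h5⟩ := deletion (s := s) χ T G.card G rfl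
    by_cases hbig : G.card ≤ (N + 2) * H.card
    · refine ⟨H, T, h1, subset_rfl, ?_, fun F hF F' hF' => hI F (h1 hF) F' (h1 hF'), h2⟩
      rw [Nat.add_mul]; omega
    have hex : ∃ A ∈ T, G.card ≤ (N + 2) * (B A).card := by
      by_contra hcon
      push Not at hcon hbig
      have hle : G.card ≤ H.card + ∑ A ∈ T, (B A).card :=
        (Finset.card_le_card h4).trans ((Finset.card_union_le _ _).trans
          (Nat.add_le_add_left Finset.card_biUnion_le _))
      have hsum : ∑ A ∈ T, (N + 2) * (B A).card ≤ ∑ A ∈ T, G.card :=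
        Finset.sum_le_sum fun A hA => (hcon A hA).le
      rw [← Finset.mul_sum, Finset.sum_const, hT, smul_eq_mul] at hsum
      nlinarith
    obtain ⟨A, hA, hAc⟩ := hex
    obtain ⟨B', hB', hc', hk'⟩ := kill hs χ (B A) (fun F hF => hG F (h3 A hF)) A (hTu A hA) (h5 A hA)
    obtain ⟨H', T', g1, g2, g3, g4, g5⟩ := hC n χ (T.erase A) B'
      (by rw [Finset.card_erase_of_mem hA]; omega)
      (fun A' hA' => hTu A' (Finset.mem_of_mem_erase hA'))
      (fun F hF => hG F (h3 A (hB' hF)))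
      (fun F hF F' hF' hne => Finset.mem_erase.2 ⟨hk' F hF F' hF',
        hI F (h3 A (hB' hF)) F' (h3 A (hB' hF')) hne⟩)
    refine ⟨H', T', g1.trans (hB'.trans (h3 A)), g2.trans (Finset.erase_subset _ _), ?_, g4, g5⟩
    calc G.card ≤ (N + 2) * (B A).card := hAc
      _ ≤ (N + 2) * (s * k * B'.card) := Nat.mul_le_mul_left _ hc'
      _ ≤ (N + 2) * (s * k * (C * H'.card)) := by gcongr
      _ = (N + 2) * (s * k) * C * H'.card := by ring
      _ ≤ _ := Nat.mul_le_mul_right _ (Nat.le_add_left _ _)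

theorem exists_coloring {k n : ℕ} (hk : 1 ≤ k) (F : Finset (Finset (Fin n)))
    (hF : ∀ A ∈ F, A.card = k) :
    ∃ χ : Fin n → Fin k, ∃ G ⊆ F, (∀ A ∈ G, Rb χ A) ∧ F.card ≤ k ^ k * G.card := by
  classical
  haveI : NeZero k := ⟨by omega⟩
  have key : ∀ A ∈ F, k ^ n ≤
      ((Finset.univ : Finset (Fin n → Fin k)).filter (fun χ => Rb χ A)).card * k ^ k := by
    intro A hA
    have e : A ≃ Fin k := Finset.equivFinOfCardEq (hF A hA)
    let f : (Fin n → Fin k) → (Fin n → Fin k) × (A → Fin k) := fun χ =>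
      (fun v => if h : v ∈ A then e ⟨v, h⟩ else χ v, fun v => χ v)
    have hf : Function.Injective f := by
      intro χ ψ h
      obtain ⟨h1, h2⟩ := Prod.mk.inj h
      funext v
      by_cases hv : v ∈ A
      · exact congrFun h2 ⟨v, hv⟩
      · have := congrFun h1 v
        simpa [hv] using this
    have hc := Finset.card_le_card_of_injOn (s := (Finset.univ : Finset (Fin n → Fin k)))
      (t := ((Finset.univ : Finset (Fin n → Fin k)).filter (fun χ => Rb χ A)) ×ˢ
        (Finset.univ : Finset (A → Fin k))) f ?_ hf.injOn
    · rw [Finset.card_product] at hc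
      simpa [hF A hA] using hc
    · intro χ _
      simp only [Finset.coe_product, Set.mem_prod, Finset.mem_coe, Finset.mem_filter,
        Finset.mem_univ, true_and, and_true]
      refine ⟨hF A hA, ?_⟩
      intro v hv w hw h
      have hv' : v ∈ A := hv
      have hw' : w ∈ A := hw
      simp only [f, hv', hw', dif_pos] at h
      simpa using e.injective h
  obtain ⟨χ, _, hmax⟩ := Finset.exists_max_image (Finset.univ : Finset (Fin n → Fin k))
    (fun χ => (F.filter (fun A => Rb χ A)).card) ⟨fun _ => 0, Finset.mem_univ _⟩
  refine ⟨χ, F.filter (fun A => Rb χ A), Finset.filter_subset _ _,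
    fun A hA => (Finset.mem_filter.1 hA).2, ?_⟩
  have h1 : F.card * k ^ n ≤ (∑ A ∈ F,
      ((Finset.univ : Finset (Fin n → Fin k)).filter (fun χ => Rb χ A)).card) * k ^ k := by
    rw [Finset.sum_mul, ← smul_eq_mul, ← Finset.sum_const]
    exact Finset.sum_le_sum key
  have h2 : (∑ A ∈ F,
      ((Finset.univ : Finset (Fin n → Fin k)).filter (fun χ => Rb χ A)).card) =
      ∑ χ : Fin n → Fin k, (F.filter (fun A => Rb χ A)).card := by
    simp only [Finset.card_filter]
    exact Finset.sum_comm
  have h3 : ∑ χ : Fin n → Fin k, (F.filter (fun A => Rb χ A)).card ≤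
      k ^ n * (F.filter (fun A => Rb χ A)).card := by
    refine (Finset.sum_le_card_nsmul _ _ _ hmax).trans ?_
    simp
  have hpos : 0 < k ^ n := Nat.pow_pos (by omega)
  rw [h2] at h1
  refine Nat.le_of_mul_le_mul_left ?_ hpos
  calc k ^ n * F.card = F.card * k ^ n := Nat.mul_comm _ _
    _ ≤ _ := h1
    _ ≤ _ := Nat.mul_le_mul_right _ h3
    _ = _ := by ring

/-- Füredi's intersection semilattice lemma. -/
theorem furedi (k s : ℕ) (hk : 1 ≤ k) (hs : k + 1 ≤ s) : ∃ C : ℕ, ∀ (n : ℕ)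
    (F : Finset (Finset (Fin n))), (∀ A ∈ F, A.card = k) →
    ∃ (G : Finset (Finset (Fin n))) (X : Fin k → Finset (Fin n)) (J : Finset (Finset (Fin k))),
      G ⊆ F ∧ IsHomogeneous k s G X J ∧ F.card ≤ C * G.card := by
  classical
  let T : Finset (Finset (Fin k)) := Finset.univ.erase Finset.univ
  obtain ⟨C, hC⟩ := main_iter k s (by omega) T.card
  refine ⟨k ^ k * C, ?_⟩
  intro n F hF
  obtain ⟨χ, G, hGF, hG, hGc⟩ := exists_coloring hk F hF
  have hI : ∀ A ∈ G, ∀ B ∈ G, A ≠ B → (A ∩ B).image χ ∈ T := by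
    intro A hA B hB hne
    refine Finset.mem_erase.2 ⟨?_, Finset.mem_univ _⟩
    intro he
    have hc : (A ∩ B).card = k := by
      have := congrArg Finset.card he
      rw [Finset.card_image_of_injOn ((hG A hA).2.mono (by simp))] at this
      simpa using this
    have e1 := Finset.eq_of_subset_of_card_le (Finset.inter_subset_left (s₁ := A) (s₂ := B))
      (by rw [hc, (hG A hA).1])
    have e2 := Finset.eq_of_subset_of_card_le (Finset.inter_subset_right (s₁ := A) (s₂ := B))
      (by rw [hc, (hG B hB).1])
    exact hne (e1.symm.trans e2)
  obtain ⟨H, T', h1, h2, h3, h4, h5⟩ := hC n χ T G rfl (fun A hA => Finset.ne_of_mem_erase hA) hG hI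
  have hpat : ∀ S : Finset (Fin n),
      pattern (fun i => Finset.univ.filter (fun v => χ v = i)) S = S.image χ := by
    intro S
    ext i
    simp only [pattern, Finset.mem_filter, Finset.mem_univ, true_and, Finset.mem_image,
      Finset.Nonempty, Finset.mem_inter]
  have hRb : ∀ A ∈ H, Rb χ A := fun A hA => hG A (h1 hA)
  have hcard : F.card ≤ k ^ k * C * H.card := by
    calc F.card ≤ k ^ k * G.card := hGc
      _ ≤ k ^ k * (C * H.card) := Nat.mul_le_mul_left _ h3
      _ = _ := by ring
  have hone : ∀ A ∈ H, ∀ i : Fin k, (A ∩ Finset.univ.filter (fun v => χ v = i)).card = 1 := by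
    intro A hA i
    have e : A ∩ Finset.univ.filter (fun v => χ v = i) = A.filter (fun v => χ v ∈ ({i} : Finset (Fin k))) := by
      ext v; simp
    have := image_filter_eq (hRb A hA) {i}
    rw [e, ← Finset.card_image_of_injOn ((hRb A hA).2.mono (Finset.coe_subset.2 (Finset.filter_subset _ _))), this]
    simp
  rcases H.eq_empty_or_nonempty with rfl | ⟨F0, hF0⟩
  · refine ⟨∅, fun i => Finset.univ.filter (fun v => χ v = i), ∅, by simp, ?_, hcard⟩
    refine ⟨?_, by simp, by simp, by simp, by simp, by simp⟩
    intro v; exact ⟨χ v, by simp, by intro i hi; exact (Finset.mem_filter.1 hi).2.symm⟩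
  have hker : ∀ A ∈ H, ∀ B ∈ T', ∃ S K, IsStarWithKernel H s K S ∧ A ∈ S ∧ K ⊆ A ∧ K.image χ = B := by
    intro A hA B hB
    obtain ⟨S, K, g1, g2, g3⟩ := h5 A hA B hB
    exact ⟨S, K, g1, g2, star_kernel_subset (by omega) g1 g2, g3⟩
  refine ⟨H, fun i => Finset.univ.filter (fun v => χ v = i), T', h1.trans hGF, ?_, hcard⟩
  refine ⟨?_, ?_, ?_, ?_, ?_, ?_⟩
  · intro v; exact ⟨χ v, by simp, by intro i hi; exact (Finset.mem_filter.1 hi).2.symm⟩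
  · intro A hA
    exact ⟨(hRb A hA).1, hone A hA⟩
  · intro B hB
    exact Finset.ne_of_mem_erase (h2 hB)
  · intro A hA B hB
    obtain ⟨S, K, ⟨a1, a2, a3⟩, a4, a5, a6⟩ := hker F0 hF0 A hA
    obtain ⟨R, L, hR, b4, b5, b6⟩ := hker F0 hF0 B hB
    have hKS : ∀ E ∈ S, K ⊆ E := fun E hE => star_kernel_subset (by omega) ⟨a1, a2, a3⟩ hE
    have hLR : ∀ E ∈ R, L ⊆ E := fun E hE => star_kernel_subset (by omega) hR hE
    obtain ⟨b1, b2, b3⟩ := hR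
    -- general avoidance
    have avoid : ∀ (S : Finset (Finset (Fin n))) (K U : Finset (Fin n)), S.card = s →
        (∀ E₁ ∈ S, ∀ E₂ ∈ S, E₁ ≠ E₂ → E₁ ∩ E₂ = K) → U.card ≤ k →
        ∃ E ∈ S, E ∩ U ⊆ K := by
      intro S K U hS hSK hU
      by_contra hcon
      push Not at hcon
      have : ∀ E : Finset (Fin n), ∃ v : Fin n, E ∈ S → (v ∈ E ∧ v ∈ U ∧ v ∉ K) := by
        intro E
        by_cases hE : E ∈ S
        · obtain ⟨v, hv, hv'⟩ := Finset.not_subset.1 (hcon E hE)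
          exact ⟨v, fun _ => ⟨(Finset.mem_inter.1 hv).1, (Finset.mem_inter.1 hv).2, hv'⟩⟩
        · have : 0 < F0.card := by rw [(hRb F0 hF0).1]; omega
          obtain ⟨v, _⟩ := Finset.card_pos.1 this
          exact ⟨v, fun h => absurd h hE⟩
      choose f hf using this
      have hle := Finset.card_le_card_of_injOn (s := S) (t := U) f (fun E hE => (hf E hE).2.1) (by
        intro E hE E' hE' he
        by_contra hne
        have h1 := hf E hE
        have h2 := hf E' hE'
        apply h1.2.2
        rw [← hSK E hE E' hE' hne]
        exact Finset.mem_inter.2 ⟨h1.1, he ▸ h2.1⟩)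
      omega
    obtain ⟨E, hE, hEL⟩ := avoid S K L a2 a3
      ((Finset.card_le_card b5).trans (hRb F0 hF0).1.le)
    obtain ⟨E', hE', hEE⟩ := avoid R L E b2 b3 (hRb E (a1 hE)).1.le
    have hint : E ∩ E' = K ∩ L := by
      apply Finset.Subset.antisymm
      · intro v hv
        obtain ⟨v1, v2⟩ := Finset.mem_inter.1 hv
        have hvL : v ∈ L := hEE (Finset.mem_inter.2 ⟨v2, v1⟩)
        exact Finset.mem_inter.2 ⟨hEL (Finset.mem_inter.2 ⟨v1, hvL⟩), hvL⟩
      · exact Finset.inter_subset_inter (hKS E hE) (hLR E' hE')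
    have him : (K ∩ L).image χ = A ∩ B := by
      rw [Finset.image_inter_of_injOn _ _ ((hRb F0 hF0).2.mono (by
        intro v hv
        rcases hv with hv | hv
        · exact a5 hv
        · exact b5 hv)), a6, b6]
    have hne : E ≠ E' := by
      intro he
      subst he
      rw [Finset.inter_self] at hint
      have : E ⊆ K := hint ▸ Finset.inter_subset_left
      have hEF : E = F0 := Finset.eq_of_subset_of_card_le (this.trans a5)
        (by rw [(hRb F0 hF0).1, (hRb E (a1 hE)).1])
      have hK : K = F0 := a5.antisymm (hEF ▸ this)
      have : A = Finset.univ := by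
        rw [← a6, hK]
        apply Finset.eq_univ_of_card
        rw [Finset.card_image_of_injOn (hRb F0 hF0).2, (hRb F0 hF0).1, Fintype.card_fin]
      exact Finset.ne_of_mem_erase (h2 hA) this
    have := h4 E (a1 hE) E' (b1 hE') hne
    rwa [hint, him] at this
  · intro A hA
    ext B
    simp only [Finset.mem_image, Finset.mem_erase, hpat]
    constructor
    · rintro ⟨A', ⟨hne, hA'⟩, rfl⟩
      exact h4 A hA A' hA' (Ne.symm hne)
    · intro hB
      obtain ⟨S, K, ⟨g1, g2, g3⟩, g4, g5, g6⟩ := hker A hA B hB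
      obtain ⟨E, hE, hne⟩ := Finset.exists_mem_ne (by omega : 1 < S.card) A
      exact ⟨E, ⟨hne, g1 hE⟩, by rw [g3 A g4 E hE (Ne.symm hne), g6]⟩
  · intro A hA A' hA' hne
    obtain ⟨S, K, g1, g4, g5, g6⟩ := hker A hA _ (h4 A hA A' hA' (Ne.symm hne))
    have : K = A ∩ A' := eq_of_image_eq (hRb A hA).2 g5 Finset.inter_subset_left g6
    exact ⟨S, this ▸ g1, g4⟩

theorem hom_extend {k s n : ℕ} {G : Finset (Finset (Fin n))}
    {X : Fin k → Finset (Fin n)} {J : Finset (Finset (Fin k))} (h : IsHomogeneous k s G X J)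
    (a : Fin k) (ha : {a} ∈ J) (F : Finset (Fin n)) (hF : F ∈ G) (U : Finset (Fin n))
    (hU : U.card + 1 < s) :
    ∃ E ∈ G, F ∩ E = F ∩ X a ∧ E ∩ U ⊆ F := by
  classical
  obtain ⟨h1, h2, h3, h4, h5, h6⟩ := h
  rw [← h5 F hF] at ha
  obtain ⟨F', hF', hpat⟩ := Finset.mem_image.1 ha
  obtain ⟨hne, hF'G⟩ := Finset.mem_erase.1 hF'
  obtain ⟨S, ⟨s1, s2, s3⟩, hFS⟩ := h6 F hF F' hF'G hne
  have hsub : F ∩ F' ⊆ F ∩ X a := by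
    intro v hv
    obtain ⟨i, hi, _⟩ := h1 v
    have : i ∈ pattern X (F ∩ F') := by
      simp only [pattern, Finset.mem_filter, Finset.mem_univ, true_and]
      exact ⟨v, Finset.mem_inter.2 ⟨hv, hi⟩⟩
    rw [hpat, Finset.mem_singleton] at this
    exact Finset.mem_inter.2 ⟨(Finset.mem_inter.1 hv).1, this ▸ hi⟩
  have hne' : (F ∩ F').Nonempty := by
    have : a ∈ pattern X (F ∩ F') := by rw [hpat]; simp
    simp only [pattern, Finset.mem_filter, Finset.mem_univ, true_and] at this
    exact this.mono Finset.inter_subset_left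
  have hK : F ∩ F' = F ∩ X a := Finset.eq_of_subset_of_card_le hsub (by
    rw [(h2 F hF).2 a]; exact Finset.card_pos.2 hne')
  rw [hK] at s3
  by_contra hcon
  push Not at hcon
  have : ∀ E : Finset (Fin n), ∃ v : Fin n, E ∈ S.erase F → (v ∈ E ∧ v ∈ U ∧ v ∉ F) := by
    intro E
    by_cases hE : E ∈ S.erase F
    · obtain ⟨hEF, hES⟩ := Finset.mem_erase.1 hE
      obtain ⟨v, hv, hv'⟩ := Finset.not_subset.1 (hcon E (s1 hES) (s3 F hFS E hES (Ne.symm hEF)))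
      exact ⟨v, fun _ => ⟨(Finset.mem_inter.1 hv).1, (Finset.mem_inter.1 hv).2, hv'⟩⟩
    · obtain ⟨v, _⟩ := hne'
      exact ⟨v, fun h => absurd h hE⟩
  choose f hf using this
  have hle := Finset.card_le_card_of_injOn (s := S.erase F) (t := U) f
    (fun E hE => (hf E hE).2.1) (by
    intro E hE E' hE' he
    by_contra hne
    have h1 := hf E hE
    have h2 := hf E' hE'
    apply h1.2.2
    have := s3 E (Finset.mem_of_mem_erase hE) E' (Finset.mem_of_mem_erase hE') hne
    have hm : f E ∈ E ∩ E' := Finset.mem_inter.2 ⟨h1.1, he ▸ h2.1⟩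
    rw [this] at hm
    exact (Finset.mem_inter.1 hm).1)
  rw [Finset.card_erase_of_mem hFS] at hle
  omega

theorem hom_path {k ℓ s n : ℕ} (hk : 4 ≤ k) (hs : k * ℓ ≤ s) {G : Finset (Finset (Fin n))}
    {X : Fin k → Finset (Fin n)} {J : Finset (Finset (Fin k))} (h : IsHomogeneous k s G X J)
    (hG : G.Nonempty) (a b : Fin k) (hab : a ≠ b) (ha : {a} ∈ J) (hb : {b} ∈ J) :
    ContainsLinearPath k ℓ G := by
  classical
  obtain ⟨F0, hF0⟩ := hG
  let c : ℕ → Fin k := fun i => if Even i then a else b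
  have hcJ : ∀ i, {c i} ∈ J := by intro i; dsimp only [c]; split_ifs <;> assumption
  have hcne : ∀ i, c i ≠ c (i + 1) := by
    intro i
    dsimp only [c]
    by_cases hi : Even i
    · simp [hi, Nat.even_add_one, hab]
    · simp [hi, Nat.even_add_one, hab.symm]
  have key : ∀ t : ℕ, t < ℓ → ∃ P : ℕ → Finset (Fin n), (∀ i, i ≤ t → P i ∈ G) ∧
      (∀ i, i + 1 ≤ t → P i ∩ P (i + 1) = P i ∩ X (c i)) ∧
      (∀ i j, i + 1 < j → j ≤ t → P i ∩ P j = ∅) := by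
    intro t
    induction t with
    | zero =>
      intro _
      exact ⟨fun _ => F0, fun _ _ => hF0, fun i hi => by omega, fun i j hi hj => by omega⟩
    | succ t ih =>
      intro ht
      obtain ⟨P, p1, p2, p3⟩ := ih (by omega)
      have hUc : ((Finset.range t).biUnion P).card ≤ t * k := by
        have := Finset.card_biUnion_le_card_mul (Finset.range t) P k (fun i hi =>
          (h.2.1 (P i) (p1 i (Finset.mem_range.1 hi).le)).1.le)
        simpa using this
      obtain ⟨E, hE, hE1, hE2⟩ := hom_extend h (c t) (hcJ t) (P t) (p1 t le_rfl)
        ((Finset.range t).biUnion P) (by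
          have : k * (t + 2) ≤ s := (Nat.mul_le_mul_left k (by omega)).trans hs
          nlinarith)
      have hdis : ∀ i, i < t → P i ∩ E = ∅ := by
        intro i hi
        rw [Finset.eq_empty_iff_forall_notMem]
        intro v hv
        obtain ⟨v1, v2⟩ := Finset.mem_inter.1 hv
        have v3 : v ∈ P t := hE2 (Finset.mem_inter.2 ⟨v2,
          Finset.mem_biUnion.2 ⟨i, Finset.mem_range.2 hi, v1⟩⟩)
        by_cases hit : i + 1 = t
        · have q := p2 i (by omega)
          rw [hit] at q
          have v4 : v ∈ P i ∩ X (c i) := q ▸ Finset.mem_inter.2 ⟨v1, v3⟩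
          have v5 : v ∈ P t ∩ X (c t) := hE1 ▸ Finset.mem_inter.2 ⟨v3, v2⟩
          have := (h.1 v).unique (Finset.mem_inter.1 v4).2 (Finset.mem_inter.1 v5).2
          exact hcne i (by rw [hit]; exact this)
        · have q := p3 i t (by omega) le_rfl
          have : v ∈ P i ∩ P t := Finset.mem_inter.2 ⟨v1, v3⟩
          rw [q] at this
          simp at this
      refine ⟨fun i => if i ≤ t then P i else E, ?_, ?_, ?_⟩
      · intro i hi
        dsimp only
        split_ifs with hc
        · exact p1 i hc
        · exact hE
      · intro i hi
        dsimp only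
        by_cases hit : i = t
        · subst hit
          simp [hE1]
        · rw [if_pos (by omega), if_pos (by omega)]
          exact p2 i (by omega)
      · intro i j hij hj
        dsimp only
        by_cases hjt : j ≤ t
        · rw [if_pos (by omega), if_pos hjt]
          exact p3 i j hij hjt
        · rw [if_pos (by omega), if_neg hjt]
          exact hdis i (by omega)
  rcases Nat.eq_zero_or_pos ℓ with rfl | hl
  · exact ⟨fun _ => F0, fun i => i.elim0, fun i => i.elim0, fun i => i.elim0, fun i => i.elim0,
      fun i => i.elim0⟩
  obtain ⟨P, p1, p2, p3⟩ := key (ℓ - 1) (by omega)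
  have hcard : ∀ i, i < ℓ → (P i).card = k := fun i hi => (h.2.1 _ (p1 i (by omega))).1
  have hone : ∀ i j : Fin ℓ, (i : ℕ) + 1 = j → (P i ∩ P j).card = 1 := by
    intro i j hij
    rw [← hij, p2 i (by omega)]
    exact (h.2.1 _ (p1 i (by omega))).2 _
  have hzero : ∀ i j : Fin ℓ, (i : ℕ) + 1 < j → P i ∩ P j = ∅ :=
    fun i j hij => p3 i j hij (by omega)
  have hneq : ∀ i j : Fin ℓ, (i : ℕ) < j → P i ≠ P j := by
    intro i j hij he
    have hc := hcard i i.2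
    by_cases hadj : (i : ℕ) + 1 = j
    · have := hone i j hadj
      rw [← he, Finset.inter_self] at this
      omega
    · have := hzero i j (by omega)
      rw [← he, Finset.inter_self] at this
      rw [this] at hc
      simp at hc
      omega
  refine ⟨fun i => P i, ?_, fun i => p1 i (by omega), fun i => hcard i i.2, hone, hzero⟩
  intro i j he
  rcases lt_trichotomy (i : ℕ) j with hlt | heq | hgt
  · exact absurd he (hneq i j hlt)
  · exact Fin.ext heq
  · exact absurd he.symm (hneq j i hgt)

/-- Intersection-closed: if each b ≠ a is avoided by a member through a, the singleton is there. -/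
theorem singleton_mem {k : ℕ} (hk : 2 ≤ k) {J : Finset (Finset (Fin k))}
    (hJ : ∀ A ∈ J, ∀ B ∈ J, A ∩ B ∈ J) (a : Fin k)
    (h : ∀ b, b ≠ a → ∃ A ∈ J, a ∈ A ∧ b ∉ A) : {a} ∈ J := by
  classical
  let S := J.filter (fun A => a ∈ A)
  have hne : S.Nonempty := by
    haveI : Nontrivial (Fin k) := Fin.nontrivial_iff_two_le.2 hk
    obtain ⟨b, hb⟩ := exists_ne a
    obtain ⟨A, hA, haA, _⟩ := h b hb
    exact ⟨A, Finset.mem_filter.2 ⟨hA, haA⟩⟩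
  obtain ⟨A, hA, hmin⟩ := Finset.exists_min_image S Finset.card hne
  obtain ⟨hAJ, haA⟩ := Finset.mem_filter.1 hA
  have : A = {a} := by
    apply Finset.Subset.antisymm
    · intro b hb
      by_contra hba
      rw [Finset.mem_singleton] at hba
      obtain ⟨B, hB, haB, hbB⟩ := h b hba
      have hm := hmin (A ∩ B) (Finset.mem_filter.2 ⟨hJ A hAJ B hB, Finset.mem_inter.2 ⟨haA, haB⟩⟩)
      have he := Finset.eq_of_subset_of_card_le (Finset.inter_subset_left (s₁ := A) (s₂ := B)) hm
      rw [← he] at hb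
      exact hbB (Finset.mem_inter.1 hb).2
    · simpa using haA
  exact this ▸ hAJ

/-- The dichotomy for closed families of large rank. -/
theorem pattern_cases {k : ℕ} (hk : 4 ≤ k) {J : Finset (Finset (Fin k))}
    (hJ : ∀ A ∈ J, ∀ B ∈ J, A ∩ B ∈ J) (hu : ∀ B ∈ J, B ≠ Finset.univ)
    (hD : ∀ D : Finset (Fin k), D.card = k - 2 → ∃ B ∈ J, D ⊆ B) :
    (patRank k J = k - 1 ∧ IsType1 J) ∨ ∃ a b : Fin k, a ≠ b ∧ {a} ∈ J ∧ {b} ∈ J := by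
  classical
  let M : Finset (Fin k) := Finset.univ.filter (fun x => Finset.univ.erase x ∉ J)
  have hM : ∀ x, x ∉ M → Finset.univ.erase x ∈ J := by
    intro x hx
    by_contra hc
    exact hx (Finset.mem_filter.2 ⟨Finset.mem_univ _, hc⟩)
  have hpair : ∀ x ∈ M, ∀ y ∈ M, x ≠ y → (Finset.univ.erase x).erase y ∈ J := by
    intro x hx y hy hxy
    obtain ⟨B, hB, hsub⟩ := hD ((Finset.univ.erase x).erase y) (by
      rw [Finset.card_erase_of_mem (by simp [hxy.symm]), Finset.card_erase_of_mem (by simp)]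
      simp; omega)
    have hmem : ∀ z, z ≠ x → z ≠ y → z ∈ B := fun z h1 h2 => hsub (by simp [h1, h2])
    have hxB : x ∉ B := by
      intro hxB
      by_cases hyB : y ∈ B
      · apply hu B hB
        ext z
        simp only [Finset.mem_univ, iff_true]
        by_cases h1 : z = x
        · exact h1 ▸ hxB
        · by_cases h2 : z = y
          · exact h2 ▸ hyB
          · exact hmem z h1 h2
      · apply (Finset.mem_filter.1 hy).2
        have : Finset.univ.erase y = B := by
          ext z
          simp only [Finset.mem_erase, Finset.mem_univ, and_true]
          constructor
          · intro h2
            by_cases h1 : z = x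
            · exact h1 ▸ hxB
            · exact hmem z h1 h2
          · rintro hz rfl; exact hyB hz
        rw [this]; exact hB
    have hyB : y ∉ B := by
      intro hyB
      apply (Finset.mem_filter.1 hx).2
      have : Finset.univ.erase x = B := by
        ext z
        simp only [Finset.mem_erase, Finset.mem_univ, and_true]
        constructor
        · intro h1
          by_cases h2 : z = y
          · exact h2 ▸ hyB
          · exact hmem z h1 h2
        · rintro hz rfl; exact hxB hz
      rw [this]; exact hB
    have : (Finset.univ.erase x).erase y = B := by
      ext z
      simp only [Finset.mem_erase, Finset.mem_univ, and_true]
      constructor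
      · rintro ⟨h2, h1⟩; exact hmem z h1 h2
      · intro hz
        exact ⟨fun h => hyB (h ▸ hz), fun h => hxB (h ▸ hz)⟩
    rw [this]; exact hB
  by_cases hM1 : M.card = 1
  · left
    obtain ⟨x, hx⟩ := Finset.card_eq_one.1 hM1
    have hxM : x ∈ M := by rw [hx]; simp
    have hxJ := (Finset.mem_filter.1 hxM).2
    refine ⟨?_, x, hxJ, fun y hy => hM y (by rw [hx]; simpa using hy)⟩
    apply le_antisymm
    · apply Nat.sInf_le
      refine ⟨Finset.univ.erase x, by simp, ?_⟩
      intro B hB hsub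
      by_cases hxB : x ∈ B
      · apply hu B hB
        ext z
        simp only [Finset.mem_univ, iff_true]
        by_cases h1 : z = x
        · exact h1 ▸ hxB
        · exact hsub (by simp [h1])
      · apply hxJ
        have : Finset.univ.erase x = B := by
          apply Finset.Subset.antisymm hsub
          intro z hz
          simp only [Finset.mem_erase, Finset.mem_univ, and_true]
          rintro rfl; exact hxB hz
        rw [this]; exact hB
    · apply le_csInf
      · exact ⟨k, Finset.univ, by simp, fun B hB h => hu B hB (Finset.univ_subset_iff.1 h)⟩
      · rintro p ⟨D, rfl, hDJ⟩
        by_contra hlt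
        obtain ⟨D', hDD', _, hD'c⟩ := Finset.exists_subsuperset_card_eq (Finset.subset_univ D)
          (n := k - 2) (by omega) (by simp)
        obtain ⟨B, hB, hsub⟩ := hD D' hD'c
        exact hDJ B hB (hDD'.trans hsub)
  · right
    -- all elements of a suitable set give singletons
    have hsing : ∀ a, (∀ b ∈ M, b ≠ a → ∃ d ∈ M, d ≠ a ∧ d ≠ b) → {a} ∈ J := by
      intro a ha
      apply singleton_mem (by omega) hJ
      intro b hba
      by_cases hbM : b ∈ M
      · obtain ⟨d, hd, hda, hdb⟩ := ha b hbM hba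
        exact ⟨_, hpair b hbM d hd hdb.symm, by simp [hba.symm, hda.symm], by simp⟩
      · exact ⟨_, hM b hbM, by simp [hba.symm], by simp⟩
    by_cases hM2 : M.card ≤ 2
    · have hc : 1 < (Mᶜ).card := by
        rw [Finset.card_compl, Fintype.card_fin]; omega
      obtain ⟨a, ha, b, hb, hab⟩ := Finset.one_lt_card.1 hc
      have : ∀ a ∈ Mᶜ, {a} ∈ J := by
        intro a ha
        apply hsing
        intro b hb _
        have : 1 < M.card := by
          have : 0 < M.card := Finset.card_pos.2 ⟨b, hb⟩
          omega
        obtain ⟨d, hd, hdb⟩ := Finset.exists_mem_ne this b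
        refine ⟨d, hd, ?_, hdb⟩
        rintro rfl
        exact (Finset.mem_compl.1 ha) hd
      exact ⟨a, b, hab, this a ha, this b hb⟩
    · have : ∀ a, {a} ∈ J := by
        intro a
        apply hsing
        intro b hb hba
        have h1 : 0 < ((M.erase a).erase b).card := by
          have := Finset.pred_card_le_card_erase (s := M) (a := a)
          have := Finset.pred_card_le_card_erase (s := M.erase a) (a := b)
          omega
        obtain ⟨d, hd⟩ := Finset.card_pos.1 h1
        simp only [Finset.mem_erase] at hd
        exact ⟨d, hd.2.2, hd.2.1, hd.1⟩
      exact ⟨⟨0, by omega⟩, ⟨1, by omega⟩, by simp, this _, this _⟩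

theorem small_rank {k s n : ℕ} {G : Finset (Finset (Fin n))}
    {X : Fin k → Finset (Fin n)} {J : Finset (Finset (Fin k))} (h : IsHomogeneous k s G X J)
    (D : Finset (Fin k)) (hD : D.card = k - 2) (hDJ : ∀ B ∈ J, ¬ D ⊆ B) :
    G.card ≤ n.choose (k - 2) := by
  classical
  obtain ⟨h1, h2, h3, h4, h5, h6⟩ := h
  have hc := Finset.card_le_card_of_injOn (s := G)
    (t := (Finset.univ : Finset (Fin n)).powersetCard (k - 2))
    (fun F => D.biUnion (fun i => F ∩ X i)) ?_ ?_
  · simpa using hc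
  · intro F hF
    have hcard : (D.biUnion (fun i => F ∩ X i)).card = k - 2 := by
      rw [Finset.card_biUnion]
      · rw [Finset.sum_congr rfl (fun i _ => (h2 F hF).2 i)]
        simpa using hD
      · intro i _ j _ hij
        refine Finset.disjoint_left.2 ?_
        intro v hv hv'
        exact hij ((h1 v).unique (Finset.mem_inter.1 hv).2 (Finset.mem_inter.1 hv').2)
    simpa using hcard
  · intro F hF F' hF' he
    by_contra hne
    dsimp only at he
    have hJ : pattern X (F ∩ F') ∈ J := by
      rw [← h5 F hF]
      exact Finset.mem_image.2 ⟨F', Finset.mem_erase.2 ⟨Ne.symm hne, hF'⟩, rfl⟩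
    apply hDJ _ hJ
    intro i hi
    obtain ⟨v, hv⟩ : (F ∩ X i).Nonempty := by
      rw [← Finset.card_pos, (h2 F hF).2 i]; exact one_pos
    have hv' : v ∈ D.biUnion (fun i => F' ∩ X i) := by
      rw [← he]; exact Finset.mem_biUnion.2 ⟨i, hi, hv⟩
    obtain ⟨j, _, hj⟩ := Finset.mem_biUnion.1 hv'
    simp only [pattern, Finset.mem_filter, Finset.mem_univ, true_and]
    exact ⟨v, Finset.mem_inter.2 ⟨Finset.mem_inter.2 ⟨(Finset.mem_inter.1 hv).1,
      (Finset.mem_inter.1 hj).1⟩, (Finset.mem_inter.1 hv).2⟩⟩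

theorem ContainsLinearPath.mono {k ℓ n : ℕ} {F G : Finset (Finset (Fin n))}
    (h : ContainsLinearPath k ℓ G) (hGF : G ⊆ F) : ContainsLinearPath k ℓ F := by
  obtain ⟨P, h1, h2, h3⟩ := h
  exact ⟨P, h1, fun i => hGF (h2 i), h3⟩

theorem partition_iter {k ℓ s C n : ℕ} (hk : 4 ≤ k) (hs : k * ℓ ≤ s)
    (hC : ∀ F : Finset (Finset (Fin n)), (∀ A ∈ F, A.card = k) →
      ∃ (G : Finset (Finset (Fin n))) (X : Fin k → Finset (Fin n)) (J : Finset (Finset (Fin k))),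
      G ⊆ F ∧ IsHomogeneous k s G X J ∧ F.card ≤ C * G.card) :
    ∀ (N : ℕ) (F : Finset (Finset (Fin n))), F.card ≤ N →
      (∀ A ∈ F, A.card = k) → ¬ ContainsLinearPath k ℓ F →
      ∃ (m : ℕ) (G : Fin m → Finset (Finset (Fin n))) (F₀ : Finset (Finset (Fin n)))
        (X : Fin m → Fin k → Finset (Fin n)) (J : Fin m → Finset (Finset (Fin k))),
        F₀ ∪ Finset.univ.biUnion G = F ∧
        (∀ i : Fin m, Disjoint (G i) F₀) ∧
        (∀ i j : Fin m, i ≠ j → Disjoint (G i) (G j)) ∧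
        (∀ i : Fin m, IsHomogeneous k s (G i) (X i) (J i)) ∧
        (∀ i : Fin m, patRank k (J i) = k - 1 ∧ IsType1 (J i)) ∧
        F₀.card ≤ C * (n.choose (k - 2)) := by
  classical
  intro N
  induction N with
  | zero =>
    intro F hFN _ _
    have : F = ∅ := Finset.card_eq_zero.1 (by omega)
    subst this
    exact ⟨0, fun i => i.elim0, ∅, fun i => i.elim0, fun i => i.elim0, by simp, fun i => i.elim0,
      fun i => i.elim0, fun i => i.elim0, fun i => i.elim0, by simp⟩
  | succ N ih =>
    intro F hFN hFk hFP
    obtain ⟨G, X, J, hGF, hG, hGc⟩ := hC F hFk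
    by_cases hsmall : F.card ≤ C * n.choose (k - 2)
    · exact ⟨0, fun i => i.elim0, F, fun i => i.elim0, fun i => i.elim0, by simp,
        fun i => i.elim0, fun i => i.elim0, fun i => i.elim0, fun i => i.elim0, hsmall⟩
    have hGne : G.Nonempty := by
      rw [Finset.nonempty_iff_ne_empty]
      rintro rfl
      simp only [Finset.card_empty, Nat.mul_zero] at hGc
      exact hsmall (hGc.trans (Nat.zero_le _))
    have hDcov : ∀ D : Finset (Fin k), D.card = k - 2 → ∃ B ∈ J, D ⊆ B := by
      intro D hD
      by_contra hcon
      push Not at hcon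
      exact hsmall (hGc.trans (Nat.mul_le_mul_left _ (small_rank hG D hD hcon)))
    have htype : patRank k J = k - 1 ∧ IsType1 J := by
      rcases pattern_cases hk hG.2.2.2.1 hG.2.2.1 hDcov with h | ⟨a, b, hab, ha, hb⟩
      · exact h
      · exact absurd ((hom_path hk hs hG hGne a b hab ha hb).mono hGF) hFP
    obtain ⟨m, G', F₀, X', J', q1, q2, q3, q4, q5, q6⟩ := ih (F \ G) (by
      have := Finset.card_pos.2 hGne
      rw [Finset.card_sdiff_of_subset hGF]; omega)
      (fun A hA => hFk A (Finset.mem_sdiff.1 hA).1)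
      (fun h => hFP (h.mono Finset.sdiff_subset))
    have hF0 : Disjoint G F₀ := by
      refine Finset.disjoint_left.2 fun A hA hA' => ?_
      have : A ∈ F \ G := q1 ▸ Finset.mem_union_left _ hA'
      exact (Finset.mem_sdiff.1 this).2 hA
    have hGi : ∀ i, Disjoint G (G' i) := by
      intro i
      refine Finset.disjoint_left.2 fun A hA hA' => ?_
      have : A ∈ F \ G := q1 ▸ Finset.mem_union_right _
        (Finset.mem_biUnion.2 ⟨i, Finset.mem_univ _, hA'⟩)
      exact (Finset.mem_sdiff.1 this).2 hA
    refine ⟨m + 1, Fin.cons G G', F₀, Fin.cons X X', Fin.cons J J', ?_, ?_, ?_, ?_, ?_, q6⟩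
    · have e : (Finset.univ : Finset (Fin (m + 1))).biUnion (Fin.cons G G') =
          G ∪ Finset.univ.biUnion G' := by
        ext A
        simp [Fin.exists_fin_succ]
      rw [e, Finset.union_left_comm, q1]
      exact Finset.union_sdiff_of_subset hGF
    · rw [Fin.forall_fin_succ]
      exact ⟨by simpa using hF0, fun i => by simpa using q2 i⟩
    · intro i j
      refine Fin.cases ?_ (fun i => ?_) i <;> refine Fin.cases ?_ (fun j => ?_) j
      · intro h; exact absurd rfl h
      · intro _; simpa using hGi j
      · intro _; simpa using (hGi i).symm
      · intro h; simpa using q3 i j (fun e => h (by rw [e]))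
    · rw [Fin.forall_fin_succ]
      exact ⟨by simpa using hG, fun i => by simpa using q4 i⟩
    · rw [Fin.forall_fin_succ]
      exact ⟨by simpa using htype, fun i => by simpa using q5 i⟩

/-- Theorem 3.8 (canonical partition): for k ≥ 4 and s ≥ kℓ there is a constant
c = c(k,s) > 0 such that every family of k-sets with no linear path of length ℓ can be
partitioned into (k,s)-homogeneous families whose intersection patterns have rank k-1 and
type 1, plus a leftover family of size at most (1/c)·C(n,k-2). -/
theorem canonical_partition (k ℓ s : ℕ) (hk : 4 ≤ k) (hl : 1 ≤ ℓ) (hs : k * ℓ ≤ s) :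
    ∃ c : ℝ, 0 < c ∧ ∀ (n : ℕ) (F : Finset (Finset (Fin n))),
      (∀ A ∈ F, A.card = k) → ¬ ContainsLinearPath k ℓ F →
      ∃ (m : ℕ) (G : Fin m → Finset (Finset (Fin n))) (F₀ : Finset (Finset (Fin n)))
        (X : Fin m → Fin k → Finset (Fin n)) (J : Fin m → Finset (Finset (Fin k))),
        F₀ ∪ Finset.univ.biUnion G = F ∧
        (∀ i : Fin m, Disjoint (G i) F₀) ∧
        (∀ i j : Fin m, i ≠ j → Disjoint (G i) (G j)) ∧
        (∀ i : Fin m, IsHomogeneous k s (G i) (X i) (J i)) ∧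
        (∀ i : Fin m, patRank k (J i) = k - 1 ∧ IsType1 (J i)) ∧
        (F₀.card : ℝ) ≤ (1 / c) * (n.choose (k - 2)) := by
  rcases Nat.lt_or_ge 1 ℓ with hl2 | hl1
  · obtain ⟨C, hC⟩ := furedi k s (by omega) (by nlinarith)
    refine ⟨1 / ((C : ℝ) + 1), by positivity, ?_⟩
    intro n F hFk hFP
    obtain ⟨m, G, F₀, X, J, q1, q2, q3, q4, q5, q6⟩ :=
      partition_iter hk hs (fun F hF => hC n F hF) F.card F le_rfl hFk hFP
    refine ⟨m, G, F₀, X, J, q1, q2, q3, q4, q5, ?_⟩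
    rw [one_div_one_div]
    have h1 : (F₀.card : ℝ) ≤ (C : ℝ) * (n.choose (k - 2)) := by exact_mod_cast q6
    have h2 : (0 : ℝ) ≤ (n.choose (k - 2)) := by positivity
    nlinarith
  · have : ℓ = 1 := by omega
    subst this
    refine ⟨1, one_pos, ?_⟩
    intro n F hFk hFP
    have hF : F = ∅ := by
      rw [Finset.eq_empty_iff_forall_notMem]
      intro A hA
      exact hFP ⟨fun _ => A, fun i j _ => Subsingleton.elim i j, fun _ => hA, fun _ => hFk A hA,
        fun i j h => by omega, fun i j h => by omega⟩
    subst hF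
    exact ⟨0, fun i => i.elim0, ∅, fun i => i.elim0, fun i => i.elim0, by simp, fun i => i.elim0,
      fun i => i.elim0, fun i => i.elim0, fun i => i.elim0, by simp⟩
end

section
/- Let H be a graph with q edges and let s = kq. Let F ⊆ binom([n],k) and let L be the kernel graph of F with threshold s. If H is a subgraph of L, then F contains a copy of the k-blowup H^{(k)} whose skeleton is H; that is, there exist members E_e ∈ F, one for each edge e = xy of H, such that E_e contains x and y and the sets E_e ∖ {x,y} over all edges e are pairwise disjoint and disjoint from the vertex set of H. -/
open Finset

theorem star_avoid {α : Type*} [DecidableEq α] (G : Finset (Finset α)) (s : ℕ)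
    (A B : Finset α) (S : Finset (Finset α)) (hS : IsStarWithKernel G s A S)
    (hAB : ∀ v ∈ B, v ∉ A) (hB : B.card < s) : ∃ E ∈ S, ∀ v ∈ E, v ∉ B := by
  by_contra! hcon
  have hne : S.Nonempty := Finset.card_pos.mp (by have := hS.2.1; omega)
  obtain ⟨Y0, hY0⟩ := hne
  obtain ⟨a0, -, -⟩ := hcon Y0 hY0
  haveI : Nonempty α := ⟨a0⟩
  choose! f hf1 hf2 using hcon
  obtain ⟨h1, h2, h3⟩ := hS
  obtain ⟨X, hX, Y, hY, hne, hXY⟩ := Finset.exists_ne_map_eq_of_card_lt_of_maps_to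
    (s := S) (t := B) (f := f) (by omega) (fun x hx => hf2 x hx)
  apply hAB (f X) (hf2 X hX)
  rw [← h3 X hX Y hY hne, Finset.mem_inter]
  exact ⟨hf1 X hX, hXY ▸ hf1 Y hY⟩

theorem star_kernel_sub {α : Type*} [DecidableEq α] (G : Finset (Finset α)) (s : ℕ)
    (A : Finset α) (S : Finset (Finset α)) (hS : IsStarWithKernel G s A S)
    (hs : 2 ≤ s) : ∀ E ∈ S, A ⊆ E := by
  intro E hE
  obtain ⟨h1, h2, h3⟩ := hS
  obtain ⟨X, hX, hne⟩ := Finset.exists_mem_ne (s := S) (by omega) E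
  rw [← h3 E hE X hX hne.symm]
  exact Finset.inter_subset_left

/-- Lemma 4.2: let H be a graph with q edges that is a subgraph of the kernel graph of F
with threshold s = kq (every edge {x,y} of H is the kernel of some s-star in F). Then F
contains a copy of the k-blowup of H whose skeleton is H: for each edge e of H there is
a member E e of F containing both endpoints of e, whose remaining vertices avoid the
vertex set of H, and the sets of remaining vertices for distinct edges are disjoint. -/
theorem kernel_graph_blowup (k q n : ℕ) (hk : 2 ≤ k) (hq : 1 ≤ q)
    (F : Finset (Finset (Fin n))) (hF : ∀ A ∈ F, A.card = k)
    (H : SimpleGraph (Fin n)) [DecidableRel H.Adj] (hHq : H.edgeFinset.card = q)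
    (hHL : ∀ x y : Fin n, H.Adj x y →
      ∃ S : Finset (Finset (Fin n)), IsStarWithKernel F (k * q) {x, y} S) :
    ∃ E : Sym2 (Fin n) → Finset (Fin n),
      (∀ e ∈ H.edgeSet, E e ∈ F ∧ ∀ a : Fin n, a ∈ e → a ∈ E e) ∧
      (∀ e ∈ H.edgeSet, ∀ v ∈ E e, v ∈ H.support → v ∈ e) ∧
      (∀ e ∈ H.edgeSet, ∀ e' ∈ H.edgeSet, e ≠ e' →
        ∀ v : Fin n, v ∈ E e → v ∈ E e' → v ∈ e ∧ v ∈ e') := by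
  have hsupp : ∀ e ∈ H.edgeSet, ∀ v ∈ e, v ∈ H.support := by
    intro e he v hv
    obtain ⟨w, rfl⟩ := Sym2.mem_iff_exists.mp hv
    exact ⟨w, he⟩
  have key : ∀ T : Finset (Sym2 (Fin n)), T ⊆ H.edgeFinset →
      ∃ E : Sym2 (Fin n) → Finset (Fin n),
      (∀ e ∈ T, E e ∈ F) ∧
      (∀ e ∈ H.edgeSet, (E e).card ≤ k) ∧
      (∀ e ∈ H.edgeSet, ∀ a : Fin n, a ∈ e → a ∈ E e) ∧
      (∀ e ∈ H.edgeSet, ∀ v ∈ E e, v ∈ H.support → v ∈ e) ∧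
      (∀ e ∈ H.edgeSet, ∀ e' ∈ H.edgeSet, e ≠ e' →
        ∀ v : Fin n, v ∈ E e → v ∈ E e' → v ∈ e ∧ v ∈ e') := by
    intro T
    induction T using Finset.induction_on with
    | empty =>
      intro _
      refine ⟨fun e => e.toFinset, by simp, ?_, by simp, by simp +contextual, by simp +contextual⟩
      intro e he
      have := Sym2.card_toFinset_of_not_isDiag e (H.not_isDiag_of_mem_edgeSet he)
      simp only [this]
      exact hk
    | insert e0 T he0 ih =>
      intro hT
      obtain ⟨E, hEF, hEk, hEe, hEs, hEd⟩ := ih (fun x hx => hT (Finset.mem_insert_of_mem hx))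
      have he0m : e0 ∈ H.edgeFinset := hT (Finset.mem_insert_self _ _)
      have he0' : e0 ∈ H.edgeSet := by simpa using he0m
      obtain ⟨S, hS⟩ : ∃ S, IsStarWithKernel F (k * q) e0.toFinset S := by
        induction e0 using Sym2.ind with
        | _ x y =>
          obtain ⟨S, hS⟩ := hHL x y he0'
          refine ⟨S, ?_⟩
          have : (s(x, y)).toFinset = {x, y} := by ext; simp
          rw [this]; exact hS
      set B := (H.edgeFinset.erase e0).biUnion E \ e0.toFinset with hBdef
      have hB : B.card < k * q := by
        have h1 : B.card ≤ ((H.edgeFinset.erase e0).biUnion E).card :=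
          Finset.card_le_card Finset.sdiff_subset
        have h2 := Finset.card_biUnion_le_card_mul (H.edgeFinset.erase e0) E k (by
          intro e he
          exact hEk e (by simpa using (Finset.mem_erase.mp he).2))
        rw [Finset.card_erase_of_mem he0m, hHq] at h2
        have h3 : (q - 1) * k < k * q := by
          rw [mul_comm]
          exact Nat.mul_lt_mul_of_pos_left (by omega) (by omega)
        omega
      obtain ⟨X, hX, hXB⟩ := star_avoid F (k * q) _ B S hS
        (fun v hv => (Finset.mem_sdiff.mp hv).2) hB
      have hsub := star_kernel_sub F (k * q) _ S hS (by nlinarith) X hX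
      have hXF : X ∈ F := hS.1 hX
      have hav : ∀ e ∈ H.edgeSet, e ≠ e0 → ∀ v ∈ X, v ∈ E e → v ∈ e0 := by
        intro e he hne v hv hvE
        by_contra hcon
        apply hXB v hv
        rw [hBdef, Finset.mem_sdiff, Finset.mem_biUnion]
        exact ⟨⟨e, Finset.mem_erase.mpr ⟨hne, by simpa using he⟩, hvE⟩, by simpa using hcon⟩
      have hav2 : ∀ e ∈ H.edgeSet, e ≠ e0 → ∀ v ∈ X, v ∈ E e → v ∈ e0 ∧ v ∈ e := by
        intro e he hne v hv hvE
        have h := hav e he hne v hv hvE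
        exact ⟨h, hEs e he v hvE (hsupp e0 he0' v h)⟩
      refine ⟨Function.update E e0 X, ?_, ?_, ?_, ?_, ?_⟩
      · intro e he
        by_cases h : e = e0
        · subst h; simpa using hXF
        · rw [Function.update_of_ne h]
          exact hEF e (Finset.mem_of_mem_insert_of_ne he h)
      · intro e he
        by_cases h : e = e0
        · subst h; simpa using (hF X hXF).le
        · rw [Function.update_of_ne h]
          exact hEk e he
      · intro e he a ha
        by_cases h : e = e0
        · subst h
          rw [Function.update_self]
          exact hsub (by simpa using ha)
        · rw [Function.update_of_ne h]
          exact hEe e he a ha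
      · intro e he v hv hvs
        by_cases h : e = e0
        · subst h
          rw [Function.update_self] at hv
          obtain ⟨w, hw⟩ := hvs
          by_cases h' : s(v, w) = e
          · rw [← h']; simp
          · exact hav s(v, w) hw h' v hv (hEe _ hw v (by simp))
        · rw [Function.update_of_ne h] at hv
          exact hEs e he v hv hvs
      · intro e he e' he' hne v hv hv'
        by_cases h : e = e0
        · subst h
          rw [Function.update_self] at hv
          rw [Function.update_of_ne hne.symm] at hv'
          exact hav2 e' he' hne.symm v hv hv'
        · rw [Function.update_of_ne h] at hv
          by_cases h' : e' = e0
          · subst h'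
            rw [Function.update_self] at hv'
            exact (hav2 e he hne v hv' hv).symm
          · rw [Function.update_of_ne h'] at hv'
            exact hEd e he e' he' hne v hv hv'
  obtain ⟨E, h1, h2, h3, h4, h5⟩ := key H.edgeFinset (Finset.Subset.refl _)
  exact ⟨E, fun e he => ⟨h1 e (by simpa using he), h3 e he⟩, h4, h5⟩
end

section
/- Let F ⊆ binom([n],k) and suppose F is partitioned into subfamilies F_1,…,F_m such that each F_i is (k,s)-homogeneous with an intersection pattern J_i of rank k−1 and type 1. For F ∈ F_i, let c(F) denote the vertex of F in the part indexed by the central element of J_i. Let H' be the simple graph on [n] whose edge set is { {c(F), y} : F ∈ F, y ∈ F ∖ {c(F)} }. Then |F| ≤ (e(H')/(k−1)) · C(n−2,k−2). -/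
open Finset

/-- Lemma 4.3: suppose F is partitioned into (k,s)-homogeneous families G i with
intersection patterns J i of rank k-1 and type 1, with central elements ci i, and let
c assign to each member A ∈ G i its central vertex (the unique vertex of A in the part
X i (ci i)). If H' is the simple graph on [n] whose edges are the pairs {c A, y} with
A ∈ F and y ∈ A ∖ {c A}, then (k-1)·|F| ≤ e(H')·C(n-2,k-2). -/
theorem kernel_graph_bound (k s n m : ℕ) (hk : 1 ≤ k) (hs : 1 ≤ s)
    (F : Finset (Finset (Fin n))) (G : Fin m → Finset (Finset (Fin n)))
    (X : Fin m → Fin k → Finset (Fin n)) (J : Fin m → Finset (Finset (Fin k)))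
    (hpart : Finset.univ.biUnion G = F)
    (hdisj : ∀ i j : Fin m, i ≠ j → Disjoint (G i) (G j))
    (hhom : ∀ i : Fin m, IsHomogeneous k s (G i) (X i) (J i))
    (hrank : ∀ i : Fin m, patRank k (J i) = k - 1 ∧ IsType1 (J i))
    (ci : Fin m → Fin k)
    (hci : ∀ i : Fin m, ∀ B : Finset (Fin k), B ≠ Finset.univ → ci i ∈ B → B ∈ J i)
    (c : Finset (Fin n) → Fin n)
    (hc : ∀ i : Fin m, ∀ A ∈ G i, c A ∈ A ∧ c A ∈ X i (ci i))
    (H' : SimpleGraph (Fin n)) [DecidableRel H'.Adj]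
    (hH' : ∀ x y : Fin n, H'.Adj x y ↔
      x ≠ y ∧ ∃ A ∈ F, (c A = x ∧ y ∈ A) ∨ (c A = y ∧ x ∈ A)) :
    (k - 1) * F.card ≤ H'.edgeFinset.card * (n - 2).choose (k - 2) := by
  classical
  have hA : ∀ A ∈ F, A.card = k ∧ c A ∈ A := by
    intro A h
    rw [← hpart] at h
    obtain ⟨i, -, hi⟩ := Finset.mem_biUnion.1 h
    exact ⟨((hhom i).2.1 A hi).1, (hc i A hi).1⟩
  rcases Nat.lt_or_ge k 2 with hk2 | hk2
  · have : k - 1 = 0 := by omega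
    simp [this]
  rw [mul_comm]
  refine Finset.card_mul_le_card_mul
    (fun (A : Finset (Fin n)) (e : Sym2 (Fin n)) => ∃ y ∈ A.erase (c A), e = s(c A, y)) ?_ ?_
  · intro A h
    obtain ⟨h1, h2⟩ := hA A h
    have h3 : (A.erase (c A)).card = k - 1 := by rw [Finset.card_erase_of_mem h2, h1]
    rw [← h3, ← Finset.card_image_of_injective (f := fun y => s(c A, y)) (A.erase (c A))
      (fun y z hyz => Sym2.congr_right.1 hyz)]
    apply Finset.card_le_card
    intro e he
    obtain ⟨y, hy, rfl⟩ := Finset.mem_image.1 he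
    rw [Finset.mem_bipartiteAbove]
    refine ⟨?_, y, hy, rfl⟩
    rw [SimpleGraph.mem_edgeFinset, SimpleGraph.mem_edgeSet, hH']
    rw [Finset.mem_erase] at hy
    exact ⟨hy.1.symm, A, h, Or.inl ⟨rfl, hy.2⟩⟩
  · intro e
    induction e using Sym2.ind with
    | _ x y =>
    intro he
    rw [SimpleGraph.mem_edgeFinset, SimpleGraph.mem_edgeSet] at he
    have hxy : x ≠ y := he.ne
    have hcard : ((Finset.univ : Finset (Fin n)) \ {x, y}).card = n - 2 := by
      rw [Finset.card_sdiff_of_subset (Finset.subset_univ _), Finset.card_pair hxy]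
      simp
    have hsub : ∀ A ∈ Finset.bipartiteBelow
        (fun (A : Finset (Fin n)) (e : Sym2 (Fin n)) => ∃ y ∈ A.erase (c A), e = s(c A, y))
        F s(x, y), A ∈ F ∧ ({x, y} : Finset (Fin n)) ⊆ A := by
      intro A h
      rw [Finset.mem_bipartiteBelow] at h
      obtain ⟨h, z, hz, hzz⟩ := h
      refine ⟨h, ?_⟩
      have h2 := (hA A h).2
      have h3 := (Finset.mem_erase.1 hz).2
      rcases Sym2.eq_iff.1 hzz with ⟨rfl, rfl⟩ | ⟨rfl, rfl⟩ <;>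
        simp [Finset.insert_subset_iff, h2, h3]
    rw [← hcard, ← Finset.card_powersetCard]
    refine Finset.card_le_card_of_injOn (fun A => A \ {x, y}) ?_ ?_
    · intro A h
      obtain ⟨h1, h2⟩ := hsub A h
      refine Finset.mem_coe.2 (Finset.mem_powersetCard.2 ⟨?_, ?_⟩)
      · exact Finset.sdiff_subset_sdiff (Finset.subset_univ _) le_rfl
      · rw [Finset.card_sdiff_of_subset h2, Finset.card_pair hxy, (hA A h1).1]
    · intro A h B h' hAB
      have h1 := (hsub A h).2
      have h2 := (hsub B h').2
      have hAB : A \ {x, y} = B \ {x, y} := hAB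
      rw [← Finset.sdiff_union_of_subset h1, hAB, Finset.sdiff_union_of_subset h2]
end

section
/- Let k and t be positive integers with k ≥ 4. There exists a constant C = C(k,t) such that for every positive integer n, ex_k(n, P^{(k)}_{2t+1}) ≤ ex_k(n, P^{(k)}_{2t+2}) ≤ t·C(n−1,k−1) + C·n^{k−2}. -/
open Finset

/-- The Turán number ex_k(n, P^{(k)}_ℓ): the maximum number of edges in a k-uniform
hypergraph on n vertices containing no linear path of length ℓ. -/
noncomputable def exLinear (k ℓ n : ℕ) : ℕ :=
  sSup {m : ℕ | ∃ F : Finset (Finset (Fin n)),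
    (∀ A ∈ F, A.card = k) ∧ ¬ ContainsLinearPath k ℓ F ∧ F.card = m}


def KerLP (w : ℕ) {n : ℕ} (G : Finset (Finset (Fin n))) (A : Finset (Fin n)) : Prop :=
  ∀ W : Finset (Fin n), W.card ≤ w → ∃ F ∈ G, A ⊆ F ∧ F ∩ W ⊆ A

lemma KerLP.mono {w n : ℕ} {G G' : Finset (Finset (Fin n))} {A : Finset (Fin n)}
    (h : KerLP w G A) (hG : G ⊆ G') : KerLP w G' A := by
  intro W hW
  obtain ⟨F, hF, h1⟩ := h W hW
  exact ⟨F, hG hF, h1⟩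

def GoodLP (w k : ℕ) {n : ℕ} (G : Finset (Finset (Fin n))) (F : Finset (Fin n)) : Prop :=
  ∀ A, A ⊆ F → A.card = k - 2 → ∃ A', A ⊆ A' ∧ A' ⊆ F ∧ A'.card < k ∧ KerLP w G A'

lemma kerLP_cover {w n : ℕ} {G : Finset (Finset (Fin n))} {A : Finset (Fin n)}
    (h : ¬ KerLP w G A) : ∃ W : Finset (Fin n), W.card ≤ w ∧
      ∀ F ∈ G, A ⊆ F → ∃ u ∈ W, u ∈ F ∧ u ∉ A := by
  unfold KerLP at h
  push Not at h
  obtain ⟨W, hW, h⟩ := h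
  refine ⟨W, hW, fun F hF hA => ?_⟩
  have := h F hF hA
  obtain ⟨u, hu, huA⟩ := Finset.not_subset.1 this
  rw [Finset.mem_inter] at hu
  exact ⟨u, hu.2, hu.1, huA⟩

open Classical in
lemma bad_countLP (w k : ℕ) (hk : 2 ≤ k) {n : ℕ} (G : Finset (Finset (Fin n)))
    (hG : ∀ A ∈ G, A.card = k) :
    (G.filter (fun F => ¬ GoodLP w k G F)).card ≤ w * w * n ^ (k - 2) := by
  set bad : Finset (Fin n) → Finset (Finset (Fin n)) := fun A =>
    G.filter (fun F => A ⊆ F ∧ ∀ A', A ⊆ A' → A' ⊆ F → A'.card < k → ¬ KerLP w G A') with hbad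
  have h1 : G.filter (fun F => ¬ GoodLP w k G F) ⊆
      (powersetCard (k-2) (univ : Finset (Fin n))).biUnion bad := by
    intro F hF
    rw [mem_filter] at hF
    obtain ⟨hF, hng⟩ := hF
    unfold GoodLP at hng
    push Not at hng
    obtain ⟨A, hA, hc, h⟩ := hng
    rw [mem_biUnion]
    refine ⟨A, by simp [mem_powersetCard, hc], ?_⟩
    simp only [hbad, mem_filter]
    exact ⟨hF, hA, h⟩
  have h2 : ∀ A ∈ powersetCard (k-2) (univ : Finset (Fin n)), (bad A).card ≤ w * w := by
    intro A hA
    have hAc : A.card = k - 2 := (mem_powersetCard.1 hA).2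
    rcases (bad A).eq_empty_or_nonempty with he | ⟨F0, hF0⟩
    · simp [he]
    have hF0' := hF0
    simp only [hbad, mem_filter] at hF0
    have hnA : ¬ KerLP w G A := hF0.2.2 A (Subset.refl _) hF0.2.1 (by omega)
    obtain ⟨W, hW, hcov⟩ := kerLP_cover hnA
    have hsub : bad A ⊆ W.biUnion (fun u => (bad A).filter (fun F => u ∈ F ∧ u ∉ A)) := by
      intro F hF
      have hF' := hF
      simp only [hbad, mem_filter] at hF
      obtain ⟨u, hu, huF, huA⟩ := hcov F hF.1 hF.2.1
      rw [mem_biUnion]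
      exact ⟨u, hu, mem_filter.2 ⟨hF', huF, huA⟩⟩
    have h3 : ∀ u ∈ W, ((bad A).filter (fun F => u ∈ F ∧ u ∉ A)).card ≤ w := by
      intro u hu
      rcases ((bad A).filter (fun F => u ∈ F ∧ u ∉ A)).eq_empty_or_nonempty with he | ⟨F1, hF1⟩
      · simp [he]
      rw [mem_filter] at hF1
      obtain ⟨hF1, huF1, huA⟩ := hF1
      simp only [hbad, mem_filter] at hF1
      have hBc : (insert u A).card = k - 1 := by
        rw [card_insert_of_notMem huA, hAc]; omega
      have hnB : ¬ KerLP w G (insert u A) := hF1.2.2 _ (subset_insert _ _)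
        (insert_subset huF1 hF1.2.1) (by omega)
      obtain ⟨W', hW', hcov'⟩ := kerLP_cover hnB
      have : (bad A).filter (fun F => u ∈ F ∧ u ∉ A) ⊆ W'.image (fun v => insert v (insert u A)) := by
        intro F hF
        rw [mem_filter] at hF
        obtain ⟨hF, huF, _⟩ := hF
        simp only [hbad, mem_filter] at hF
        obtain ⟨v, hv, hvF, hvB⟩ := hcov' F hF.1 (insert_subset huF hF.2.1)
        rw [mem_image]
        refine ⟨v, hv, ?_⟩
        apply eq_of_subset_of_card_le
        · exact insert_subset hvF (insert_subset huF hF.2.1)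
        · rw [card_insert_of_notMem hvB, hBc, hG F hF.1]; omega
      exact (card_le_card this).trans (card_image_le.trans hW')
    calc (bad A).card ≤ _ := card_le_card hsub
      _ ≤ W.card * w := card_biUnion_le_card_mul _ _ _ h3
      _ ≤ w * w := Nat.mul_le_mul_right _ hW
  calc _ ≤ _ := card_le_card h1
    _ ≤ (powersetCard (k-2) (univ : Finset (Fin n))).card * (w * w) :=
        card_biUnion_le_card_mul _ _ _ h2
    _ = n.choose (k-2) * (w * w) := by rw [card_powersetCard, card_univ, Fintype.card_fin]
    _ ≤ n ^ (k-2) * (w * w) := Nat.mul_le_mul_right _ (Nat.choose_le_pow _ _)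
    _ = _ := by ring

/-- averaging over colourings -/
lemma colorLP {n : ℕ} {ι : Type*} [DecidableEq ι] (I : Finset ι) {α : Type*} [Fintype α]
    [DecidableEq α] [Nonempty α] (m : ℕ)
    (S : ι → Finset (Fin n)) (g : ι → Fin n → α) (hS : ∀ i ∈ I, (S i).card ≤ m) :
    ∃ c : Fin n → α, I.card ≤ (Fintype.card α) ^ m *
      (I.filter (fun i => ∀ v ∈ S i, c v = g i v)).card := by
  set q := Fintype.card α with hq
  have hq0 : 0 < q := Fintype.card_pos
  have key : ∀ i ∈ I, q ^ n ≤ q ^ m *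
      ((univ : Finset (Fin n → α)).filter (fun c => ∀ v ∈ S i, c v = g i v)).card := by
    intro i hi
    have : (univ : Finset (Fin n → α)).filter (fun c => ∀ v ∈ S i, c v = g i v) =
        Fintype.piFinset (fun v => if v ∈ S i then {g i v} else univ) := by
      ext c
      simp only [mem_filter, mem_univ, true_and, Fintype.mem_piFinset]
      constructor
      · intro h v
        by_cases hv : v ∈ S i
        · simp [hv, h v hv]
        · simp [hv]
      · intro h v hv
        have := h v
        simpa [hv] using this
    rw [this, Fintype.card_piFinset]
    have : ∀ v, (if v ∈ S i then ({g i v} : Finset α) else univ).card = if v ∈ S i then 1 else q := by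
      intro v; split_ifs <;> simp [hq]
    simp_rw [this]
    rw [prod_ite]
    simp only [prod_const, one_pow, one_mul]
    rw [← pow_add]
    apply Nat.pow_le_pow_right hq0
    have h1 : (univ.filter (fun v => v ∉ S i)).card + (S i).card = n := by
      have := card_compl_add_card (S i)
      rw [Fintype.card_fin] at this
      convert this using 3
      ext; simp
    have := hS i hi
    omega
  by_contra hcon
  push Not at hcon
  have e1 : ∑ i ∈ I, ((univ : Finset (Fin n → α)).filter (fun c => ∀ v ∈ S i, c v = g i v)).card
      = ∑ c : Fin n → α, (I.filter (fun i => ∀ v ∈ S i, c v = g i v)).card := by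
    simp_rw [card_filter]
    exact sum_comm
  have e2 : I.card * q ^ n ≤ q ^ m * ∑ c : Fin n → α, (I.filter (fun i => ∀ v ∈ S i, c v = g i v)).card := by
    rw [← e1, mul_sum, ← smul_eq_mul, ← sum_const]
    exact sum_le_sum key
  have e3 : q ^ m * ∑ c : Fin n → α, (I.filter (fun i => ∀ v ∈ S i, c v = g i v)).card
      < ∑ c : Fin n → α, I.card := by
    rw [mul_sum]
    exact sum_lt_sum_of_nonempty univ_nonempty (fun c _ => hcon c)
  rw [sum_const, card_univ, Fintype.card_fun, Fintype.card_fin, smul_eq_mul] at e3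
  rw [← hq] at e3
  linarith [mul_comm I.card (q ^ n)]

/-- list version of linear paths -/
def LPL {n : ℕ} : List (Finset (Fin n)) → Prop
  | [] => True
  | P :: l => (∀ Q ∈ l.head?, (P ∩ Q).card = 1) ∧ (∀ R ∈ l.tail, P ∩ R = ∅) ∧ LPL l

lemma LPL.cons_get {n : ℕ} : ∀ {l : List (Finset (Fin n))}, LPL l →
    (∀ i j (hi : i < l.length) (hj : j < l.length), i + 1 = j → (l[i] ∩ l[j]).card = 1) ∧
    (∀ i j (hi : i < l.length) (hj : j < l.length), i + 1 < j → l[i] ∩ l[j] = ∅)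
  | [], _ => by simp
  | P :: l, h => by
    obtain ⟨h1, h2, h3⟩ := h
    obtain ⟨i1, i2⟩ := LPL.cons_get h3
    constructor
    · rintro (_ | i) j hi hj hij
      · subst hij
        apply h1
        cases l with
        | nil => simp at hj
        | cons a l => simp
      · subst hij
        simpa using i1 i (i+1) (by simpa using hi) (by simpa using hj) rfl
    · rintro (_ | i) (_ | j) hi hj hij
      · omega
      · apply h2
        cases l with
        | nil => simp at hj
        | cons a l =>
          cases j with
          | zero => omega
          | succ j => simp
      · omega
      · simpa using i2 i j (by simpa using hi) (by simpa using hj) (by omega)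

lemma LPL.contains {n k ℓ : ℕ} (hk : 2 ≤ k) {E : Finset (Finset (Fin n))}
    (hE : ∀ A ∈ E, A.card = k) {l : List (Finset (Fin n))} (hl : LPL l) (hlen : l.length = ℓ)
    (hm : ∀ P ∈ l, P ∈ E) : ContainsLinearPath k ℓ E := by
  subst hlen
  obtain ⟨h1, h2⟩ := hl.cons_get
  have hlt : ∀ i j : Fin l.length, (i : ℕ) < j → l[i] ≠ l[j] := by
    intro i j hij he
    have hc : (l[i] ∩ l[j]).card = k := by
      rw [he, inter_self]; exact hE _ (hm _ (List.getElem_mem _))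
    rcases Nat.lt_or_ge (i+1) j with h | h
    · have := h2 i j i.2 j.2 h
      simp only [Fin.getElem_fin] at hc
      rw [this] at hc; simp at hc; omega
    · have := h1 i j i.2 j.2 (by omega)
      simp only [Fin.getElem_fin] at hc
      omega
  refine ⟨fun i => l[i], ?_, fun i => hm _ (List.getElem_mem _),
    fun i => hE _ (hm _ (List.getElem_mem _)), fun i j h => h1 i j i.2 j.2 h,
    fun i j h => h2 i j i.2 j.2 h⟩
  intro i j hij
  rcases lt_trichotomy (i:ℕ) j with h | h | h
  · exact absurd hij (hlt i j h)
  · exact Fin.ext h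
  · exact absurd hij.symm (hlt j i h)

lemma card_union_listLP {n k : ℕ} (l : List (Finset (Fin n))) (h : ∀ P ∈ l, P.card = k) :
    ∃ U : Finset (Fin n), U.card ≤ k * l.length ∧ ∀ P ∈ l, P ⊆ U := by
  induction l with
  | nil => exact ⟨∅, by simp⟩
  | cons P l ih =>
    obtain ⟨U, h1, h2⟩ := ih (fun Q hQ => h Q (by simp [hQ]))
    refine ⟨P ∪ U, ?_, ?_⟩
    · have := card_union_le P U
      have := h P (by simp)
      simp only [List.length_cons]
      rw [mul_add]; omega
    · intro Q hQ
      rcases List.mem_cons.1 hQ with rfl | hQ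
      · exact subset_union_left
      · exact (h2 Q hQ).trans subset_union_right

/-- expansion of a path of kernels -/
lemma expandLP {n k w L : ℕ} {E : Finset (Finset (Fin n))}
    (hE : ∀ A ∈ E, A.card = k) (U : Finset (Fin n)) (hU : U.card ≤ L + 1)
    (hw : (k + 1) * (L + 1) ≤ w) :
    ∀ (us : List (Fin n)) (u : Fin n), us.length ≤ L → (∀ v ∈ u :: us, v ∈ U) →
      (u :: us).Nodup → List.IsChain (fun a b => KerLP w E {a, b}) (u :: us) →
      ∃ Ps : List (Finset (Fin n)), Ps.length = us.length ∧ (∀ P ∈ Ps, P ∈ E) ∧ LPL Ps ∧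
        (∀ P ∈ Ps, ∀ v ∈ P, v ∈ U → v ∈ u :: us) ∧ (∀ P ∈ Ps.tail, u ∉ P) ∧
        (∀ P ∈ Ps.head?, u ∈ P) := by
  intro us
  induction us with
  | nil => intro u _ _ _ _; exact ⟨[], by simp [LPL]⟩
  | cons u us ih =>
    intro v hlen hmem hnd hch
    rw [List.isChain_cons_cons] at hch
    obtain ⟨hker, hch⟩ := hch
    have hnd' := List.nodup_cons.1 hnd
    simp only [List.length_cons] at hlen
    obtain ⟨Ps, p1, p2, p3, p4, p5, p6⟩ := ih u (by omega)
      (fun x hx => hmem x (List.mem_cons_of_mem _ hx)) hnd'.2 hch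
    obtain ⟨W, w1, w2⟩ := card_union_listLP Ps (fun P hP => hE P (p2 P hP))
    obtain ⟨P, hP, hPs, hPi⟩ := hker (U ∪ W) (by
      have := card_union_le U W
      have : k * Ps.length ≤ k * (L + 1) := Nat.mul_le_mul_left _ (by omega)
      have : (k + 1) * (L + 1) = k * (L + 1) + (L + 1) := by ring
      omega)
    have hvP : v ∈ P := hPs (by simp)
    have huP : u ∈ P := hPs (by simp)
    have hmeet : ∀ Q ∈ Ps, P ∩ Q ⊆ {u} := by
      intro Q hQ x hx
      rw [mem_inter] at hx
      have := hPi (mem_inter.2 ⟨hx.1, mem_union_right _ (w2 Q hQ hx.2)⟩)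
      simp only [mem_insert, mem_singleton] at this
      rcases this with rfl | rfl
      · exact absurd (p4 Q hQ x hx.2 (hmem x (by simp))) hnd'.1
      · simp
    refine ⟨P :: Ps, by simp [p1], ?_, ⟨?_, ?_, p3⟩, ?_, ?_, ?_⟩
    · intro Q hQ
      rcases List.mem_cons.1 hQ with rfl | hQ
      · exact hP
      · exact p2 Q hQ
    · intro Q hQ
      have hQ' : Q ∈ Ps := List.mem_of_mem_head? hQ
      have : P ∩ Q = {u} := by
        apply Subset.antisymm (hmeet Q hQ')
        simp [huP, p6 Q hQ]
      simp [this]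
    · intro R hR
      have hR' : R ∈ Ps := List.mem_of_mem_tail hR
      rw [← subset_empty]
      intro x hx
      have := hmeet R hR' hx
      rw [mem_singleton] at this
      subst this
      exact absurd (mem_inter.1 hx).2 (p5 R hR)
    · intro Q hQ x hx hxU
      rcases List.mem_cons.1 hQ with rfl | hQ
      · have := hPi (mem_inter.2 ⟨hx, mem_union_left _ hxU⟩)
        simp only [mem_insert, mem_singleton] at this
        rcases this with rfl | rfl <;> simp
      · exact List.mem_cons_of_mem _ (p4 Q hQ x hx hxU)
    · intro Q hQ hvQ
      exact hnd'.1 (p4 Q hQ v hvQ (hmem v (by simp)))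
    · intro Q hQ
      simp at hQ; subst hQ; exact hvP

lemma kerpathLP {n k w L : ℕ} (hk : 2 ≤ k) {E : Finset (Finset (Fin n))}
    (hE : ∀ A ∈ E, A.card = k) 
    (hw : (k + 1) * (L + 1) ≤ w) (us : List (Fin n)) (u : Fin n) (hlen : us.length = L)
    (hnd : (u :: us).Nodup) (hch : List.IsChain (fun a b => KerLP w E {a, b}) (u :: us)) :
    ContainsLinearPath k L E := by
  obtain ⟨Ps, p1, p2, p3, -⟩ := expandLP hE (u :: us).toFinset
    ((List.toFinset_card_le _).trans (by simp [hlen])) hw us u hlen.le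
    (fun v hv => by simpa using hv) hnd hch
  exact p3.contains hk hE (p1.trans hlen) p2

/-- walk with two singleton kernels -/
lemma walkLP {n k w L : ℕ} (hk : 2 ≤ k) {E : Finset (Finset (Fin n))}
    (hE : ∀ A ∈ E, A.card = k) (hw : (k + 1) * (L + 1) ≤ w)
    (H : ℕ → Finset (Finset (Fin n))) (hHE : ∀ i, H i ⊆ E) {α : Type*} (c : Fin n → α)
    (y1 y2 : α) (hy : y1 ≠ y2) (hne : (H L).Nonempty)
    (hv1 : ∀ i ≤ L, ∀ F ∈ H i, ∃ v ∈ F, c v = y1)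
    (hv2 : ∀ i ≤ L, ∀ F ∈ H i, ∃ v ∈ F, c v = y2)
    (hker : ∀ i < L, ∀ F ∈ H (i+1), ∀ v ∈ F, (c v = y1 ∨ c v = y2) → KerLP w (H i) {v}) :
    ContainsLinearPath k L E := by
  have main : ∀ m ≤ L, ∃ (P : Finset (Fin n)) (l : List (Finset (Fin n))), l.length = m ∧
      LPL (P :: l) ∧ (∀ Q ∈ l, Q ∈ E) ∧ P ∈ H (L - m) ∧
      ∃ v ∈ P, (c v = y1 ∨ c v = y2) ∧ ∀ Q ∈ l, v ∉ Q := by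
    intro m
    induction m with
    | zero =>
      intro _
      obtain ⟨P, hP⟩ := hne
      obtain ⟨v, hv, hc⟩ := hv1 L le_rfl P hP
      exact ⟨P, [], rfl, by simp [LPL], by simp, by simpa using hP, v, hv, Or.inl hc, by simp⟩
    | succ m ih =>
      intro hm
      obtain ⟨P, l, h1, h2, h3, h4, v, hv, hc, h5⟩ := ih (by omega)
      have hPl : ∀ Q ∈ P :: l, Q ∈ E := by
        intro Q hQ
        rcases List.mem_cons.1 hQ with rfl | hQ
        · exact hHE _ h4
        · exact h3 Q hQ
      obtain ⟨W, w1, w2⟩ := card_union_listLP (P :: l) (fun P hP => hE P (hPl P hP))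
      have e : L - m = (L - (m+1)) + 1 := by omega
      rw [e] at h4
      obtain ⟨P', hP', hvP', hint⟩ := hker _ (by omega) P h4 v hv hc W (by
        simp only [List.length_cons] at w1
        have : k * (l.length + 1) ≤ k * (L + 1) := Nat.mul_le_mul_left _ (by omega)
        have : (k + 1) * (L + 1) = k * (L + 1) + (L + 1) := by ring
        omega)
      have hvP'' : v ∈ P' := hvP' (by simp)
      refine ⟨P', P :: l, by simp [h1], ⟨?_, ?_, h2⟩, hPl, hP', ?_⟩
      · intro Q hQ
        simp at hQ; subst hQ
        have : P' ∩ P = {v} := by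
          apply Subset.antisymm
          · exact (inter_subset_inter_left (w2 P (by simp))).trans hint
          · simp [hv, hvP'']
        simp [this]
      · intro R hR
        simp at hR
        rw [← subset_empty]
        intro x hx
        have := hint (inter_subset_inter_left (w2 R (by simp [hR])) hx)
        rw [mem_singleton] at this
        subst this
        exact absurd (mem_inter.1 hx).2 (h5 R hR)
      · have fin : ∀ v' ∈ P', v' ≠ v → ∀ Q ∈ P :: l, v' ∉ Q := by
          intro v' hv' hne Q hQ hvQ
          have := hint (mem_inter.2 ⟨hv', w2 Q hQ hvQ⟩)
          rw [mem_singleton] at this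
          exact hne this
        rcases hc with hc | hc
        · obtain ⟨v', hv', hc'⟩ := hv2 _ (by omega) P' hP'
          refine ⟨v', hv', Or.inr hc', fin v' hv' ?_⟩
          rintro rfl; exact hy (hc.symm.trans hc')
        · obtain ⟨v', hv', hc'⟩ := hv1 _ (by omega) P' hP'
          refine ⟨v', hv', Or.inl hc', fin v' hv' ?_⟩
          rintro rfl; exact hy (hc'.symm.trans hc)
  obtain ⟨P, l, h1, h2, h3, -⟩ := main L le_rfl
  exact LPL.contains hk hE h2.2.2 h1 h3

/-- combinatorics of intersection-closed families -/
lemma closureLP {k : ℕ} (hk : 4 ≤ k) (J : Finset (Finset (Fin k)))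
    (hcl : ∀ A ∈ J, ∀ B ∈ J, A ∩ B ∈ J)
    (hcov : ∀ A : Finset (Fin k), A.card = k - 2 → ∃ A', A ⊆ A' ∧ A' ≠ univ ∧ A' ∈ J) :
    (∃ x, ∀ b, b ≠ x → ({x, b} : Finset (Fin k)) ∈ J) ∨
    (∃ y1 y2, y1 ≠ y2 ∧ {y1} ∈ J ∧ {y2} ∈ J) := by
  have pair : ∀ a b : Fin k, a ≠ b → ({a, b}ᶜ ∈ J ∨ {a}ᶜ ∈ J ∨ {b}ᶜ ∈ J) := by
    intro a b hab
    obtain ⟨A', h1, h2, h3⟩ := hcov {a, b}ᶜ (by rw [card_compl, card_pair hab, Fintype.card_fin])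
    have hsub : A'ᶜ ⊆ {a, b} := by
      have := compl_subset_compl.2 h1; simpa using this
    have hne : A'ᶜ ≠ ∅ := by simpa using h2
    rw [← compl_compl A'] at h3
    generalize A'ᶜ = S at *
    by_cases ha : a ∈ S <;> by_cases hb : b ∈ S
    · left
      have : S = {a, b} := Subset.antisymm hsub (by intro x; simp; rintro (rfl|rfl) <;> assumption)
      rwa [← this]
    · right; left
      have : S = {a} := by
        ext x; have := @hsub x; simp at this ⊢; grind
      rwa [← this]
    · right; right
      have : S = {b} := by
        ext x; have := @hsub x; simp at this ⊢; grind
      rwa [← this]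
    · exfalso; apply hne
      ext x; have := @hsub x; simp at this ⊢; grind
  have un : ∀ (S : Finset (Fin k)), S.Nonempty → (∀ a ∈ S, ∃ U, a ∈ U ∧ U ⊆ S ∧ Uᶜ ∈ J) → Sᶜ ∈ J := by
    intro S hS h
    choose! U hU using h
    have : S = S.sup' hS U := by
      apply Subset.antisymm
      · intro a ha
        exact (le_sup' U ha) (hU a ha).1
      · exact sup'_le hS U (fun a ha => (hU a ha).2.1)
    rw [this]
    refine sup'_induction hS U (p := fun T => Tᶜ ∈ J) ?_ (fun a ha => (hU a ha).2.2)
    intro A hA B hB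
    have := hcl _ hA _ hB
    rwa [← compl_union] at this
  by_cases hN : ∃ a b : Fin k, a ≠ b ∧ {a}ᶜ ∉ J ∧ {b}ᶜ ∉ J
  · right
    obtain ⟨a, b, hab, ha, hb⟩ := hN
    have single : ∀ y, y ≠ a → y ≠ b → {y} ∈ J := by
      intro y hya hyb
      have := un {y}ᶜ ⟨a, by simp [hya.symm]⟩ (by
        intro z hz
        simp at hz
        by_cases hzM : {z}ᶜ ∈ J
        · exact ⟨{z}, by simp, by simp [Ne.symm hz], hzM⟩
        · by_cases hza : z = a
          · subst hza
            refine ⟨{z, b}, by simp, ?_, ?_⟩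
            · intro x; simp; rintro (rfl | rfl) <;> grind
            · have := pair z b hab; tauto
          · refine ⟨{z, a}, by simp, ?_, ?_⟩
            · intro x; simp; rintro (rfl | rfl) <;> grind
            · have := pair z a hza; tauto)
      simpa using this
    have h2 : 1 < (({a, b} : Finset (Fin k))ᶜ).card := by
      rw [card_compl, card_pair hab, Fintype.card_fin]; omega
    obtain ⟨y1, hy1, y2, hy2, hne⟩ := one_lt_card.1 h2
    simp at hy1 hy2
    exact ⟨y1, y2, hne, single y1 hy1.1 hy1.2, single y2 hy2.1 hy2.2⟩
  · left
    push Not at hN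
    have : ∃ x, ∀ b, b ≠ x → {b}ᶜ ∈ J := by
      by_cases h : ∃ a : Fin k, {a}ᶜ ∉ J
      · obtain ⟨a, ha⟩ := h
        exact ⟨a, fun b hb => hN a b hb.symm ha⟩
      · push Not at h
        exact ⟨⟨0, by omega⟩, fun b _ => h b⟩
    obtain ⟨x, hx⟩ := this
    refine ⟨x, fun b hb => ?_⟩
    have := un {x, b}ᶜ (by
      rw [← card_pos, card_compl, card_pair hb.symm, Fintype.card_fin]; omega) (by
      intro a ha
      simp at ha
      exact ⟨{a}, by simp, by simp; tauto, hx a ha.1⟩)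
    simpa using this

open Classical in
noncomputable def patLP (w : ℕ) {n k : ℕ} (c : Fin n → Fin k) (G : Finset (Finset (Fin n)))
    (F : Finset (Fin n)) : Finset (Finset (Fin k)) :=
  univ.filter (fun J => KerLP w G (F.filter (fun v => c v ∈ J)))

lemma mem_patLP {w n k : ℕ} {c : Fin n → Fin k} {G : Finset (Finset (Fin n))}
    {F : Finset (Fin n)} {J : Finset (Fin k)} :
    J ∈ patLP w c G F ↔ KerLP w G (F.filter (fun v => c v ∈ J)) := by
  simp [patLP]

open Classical in
lemma stepLP (w k : ℕ) (hk : 2 ≤ k) {n : ℕ} (c : Fin n → Fin k) (G : Finset (Finset (Fin n)))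
    (hG : ∀ A ∈ G, A.card = k) :
    ∃ G', G' ⊆ G ∧ (∀ F ∈ G', GoodLP w k G F ∧ ∀ F' ∈ G', patLP w c G F' = patLP w c G F) ∧
      G.card ≤ w * w * n ^ (k - 2) + 2 ^ (2 ^ k) * G'.card := by
  set good := G.filter (fun F => GoodLP w k G F) with hgood
  obtain ⟨J0, -, hJ0⟩ := exists_max_image (univ : Finset (Finset (Finset (Fin k))))
    (fun J => (good.filter (fun F => patLP w c G F = J)).card) univ_nonempty
  refine ⟨good.filter (fun F => patLP w c G F = J0), ?_, ?_, ?_⟩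
  · exact (filter_subset _ _).trans (filter_subset _ _)
  · intro F hF
    rw [mem_filter] at hF
    refine ⟨(mem_filter.1 hF.1).2, fun F' hF' => ?_⟩
    rw [mem_filter] at hF'
    rw [hF.2, hF'.2]
  · have h1 := bad_countLP w k hk G hG
    have h2 : good.card + (G.filter (fun F => ¬ GoodLP w k G F)).card = G.card :=
      card_filter_add_card_filter_not _
    have h3 : good.card = ∑ J ∈ (univ : Finset (Finset (Finset (Fin k)))),
        (good.filter (fun F => patLP w c G F = J)).card :=
      card_eq_sum_card_fiberwise (fun _ _ => mem_coe.2 (mem_univ _))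
    have h4 : good.card ≤ 2 ^ (2 ^ k) * (good.filter (fun F => patLP w c G F = J0)).card := by
      rw [h3]
      refine (sum_le_card_nsmul _ _ _ (fun J hJ => hJ0 J hJ)).trans ?_
      simp
    omega

lemma chainLP (w k : ℕ) (hk : 2 ≤ k) (T : ℕ) : ∃ C : ℕ, ∀ (n : ℕ) (c : Fin n → Fin k)
    (G0 : Finset (Finset (Fin n))), (∀ A ∈ G0, A.card = k) → C * n ^ (k - 2) < G0.card →
    ∃ G : ℕ → Finset (Finset (Fin n)), G 0 = G0 ∧ Antitone G ∧ (G T).Nonempty ∧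
      ∀ i, ∀ F ∈ G (i+1), GoodLP w k (G i) F ∧
        ∀ F' ∈ G (i+1), patLP w c (G i) F' = patLP w c (G i) F := by
  have hC : ∀ T : ℕ, ∃ C : ℕ, ∀ (N : ℕ) (a : ℕ → ℕ),
      (∀ i, a i ≤ w * w * N + 2 ^ (2 ^ k) * a (i+1)) → a 0 ≤ C * N + (2 ^ (2 ^ k)) ^ T * a T := by
    intro T
    induction T with
    | zero => exact ⟨0, fun N a _ => by simp⟩
    | succ T ih =>
      obtain ⟨C, hC⟩ := ih
      refine ⟨C + (2 ^ (2 ^ k)) ^ T * (w * w), fun N a ha => (hC N a ha).trans ?_⟩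
      calc C * N + (2 ^ (2 ^ k)) ^ T * a T ≤ C * N + (2 ^ (2 ^ k)) ^ T * (w * w * N + 2 ^ (2 ^ k) * a (T+1)) := by
            gcongr; exact ha T
        _ = _ := by ring
  obtain ⟨C, hC⟩ := hC T
  refine ⟨C, fun n c G0 hG0 hlt => ?_⟩
  have st : ∀ G : Finset (Finset (Fin n)), ∃ G', G' ⊆ G ∧ ((∀ A ∈ G, A.card = k) →
    (∀ F ∈ G', GoodLP w k G F ∧ ∀ F' ∈ G', patLP w c G F' = patLP w c G F) ∧
      G.card ≤ w * w * n ^ (k - 2) + 2 ^ (2 ^ k) * G'.card) := by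
    intro G
    by_cases h : ∀ A ∈ G, A.card = k
    · obtain ⟨G', h1, h2⟩ := stepLP w k hk c G h
      exact ⟨G', h1, fun _ => h2⟩
    · exact ⟨G, Subset.refl _, fun h' => absurd h' h⟩
  choose f hf1 hf2 using st
  have hs : ∀ i, f^[i+1] G0 = f (f^[i] G0) := fun i => Function.iterate_succ_apply' f i G0
  have anti : Antitone (fun i => f^[i] G0) := by
    apply antitone_nat_of_succ_le
    intro i
    simp only [hs]
    exact hf1 _
  have hu : ∀ i, ∀ A ∈ f^[i] G0, A.card = k := by
    intro i A hA
    exact hG0 A (anti (Nat.zero_le i) hA)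
  refine ⟨fun i => f^[i] G0, rfl, anti, ?_, ?_⟩
  · have := hC (n ^ (k-2)) (fun i => (f^[i] G0).card) (fun i => by
      simp only [hs]; exact (hf2 _ (hu i)).2)
    simp only [Function.iterate_zero, id] at this
    rw [← card_pos]
    by_contra h0
    have h0 : (f^[T] G0).card = 0 := by simpa using h0
    rw [h0] at this
    omega
  · intro i F hF
    simp only [hs] at hF
    have := (hf2 _ (hu i)).1 F hF
    simp only [hs]
    exact this

def StarLP (w : ℕ) {n : ℕ} (E : Finset (Finset (Fin n))) (F : Finset (Fin n)) : Prop :=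
  ∃ x ∈ F, ∀ b ∈ F, b ≠ x → KerLP w E {x, b}

lemma stretchLP (R M : ℕ) (f : ℕ → ℕ) (hf : Antitone f) (hM : f 0 ≤ M) :
    ∃ j ≤ M, f (j * R) = f ((j + 1) * R) := by
  by_contra h
  push Not at h
  have : ∀ j ≤ M + 1, f (j * R) + j ≤ M := by
    intro j
    induction j with
    | zero => intro _; simpa using hM
    | succ j ih =>
      intro hj
      have h1 := ih (by omega)
      have h2 := h j (by omega)
      have h3 : f ((j+1) * R) ≤ f (j * R) := hf (Nat.mul_le_mul_right _ (by omega))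
      omega
  have := this (M+1) le_rfl
  omega

lemma homogLP (w k : ℕ) (hk : 2 ≤ k) (R : ℕ) : ∃ C : ℕ, ∀ (n : ℕ) (c : Fin n → Fin k)
    (G0 : Finset (Finset (Fin n))), (∀ A ∈ G0, A.card = k) → C * n ^ (k - 2) < G0.card →
    ∃ (H : ℕ → Finset (Finset (Fin n))) (J : Finset (Finset (Fin k))), (∀ i, H i ⊆ G0) ∧
      Antitone H ∧ (H R).Nonempty ∧
      ∀ i < R, ∀ F ∈ H (i+1), GoodLP w k (H i) F ∧ patLP w c (H i) F = J := by
  obtain ⟨C, hC⟩ := chainLP w k hk ((2 ^ k + 1) * R)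
  refine ⟨C, fun n c G0 hG0 hlt => ?_⟩
  obtain ⟨G, g0, ganti, ⟨F0, hF0⟩, gp⟩ := hC n c G0 hG0 hlt
  have panti : Antitone (fun i => patLP w c (G i) F0) := by
    intro i j hij J hJ
    simp only [mem_patLP] at hJ ⊢
    exact hJ.mono (ganti hij)
  obtain ⟨j, hj, hje⟩ := stretchLP R (2 ^ k) (fun i => (patLP w c (G i) F0).card)
    (fun a b hab => card_le_card (panti hab)) (by
      refine (card_le_univ _).trans ?_
      simp)
  have hle : (j + 1) * R ≤ (2 ^ k + 1) * R := Nat.mul_le_mul_right _ (by omega)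
  have hjR : (j + 1) * R = j * R + R := by ring
  have hconst : ∀ i ≤ R, patLP w c (G (j * R + i)) F0 = patLP w c (G (j * R)) F0 := by
    intro i hi
    apply eq_of_subset_of_card_le (panti (by omega))
    rw [hje]
    exact card_le_card (panti (by omega))
  refine ⟨fun i => G (j * R + i), patLP w c (G (j * R)) F0, ?_, ?_, ⟨F0, ?_⟩, ?_⟩
  · intro i; rw [← g0]; exact ganti (Nat.zero_le _)
  · intro a b hab; exact ganti (by omega)
  · exact ganti (by omega) hF0
  · intro i hi F hF
    have h := gp (j * R + i) F hF
    refine ⟨h.1, ?_⟩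
    rw [← hconst i hi.le]
    exact (h.2 F0 (ganti (by omega) hF0)).symm

open Classical in
lemma lemmaA (k L w : ℕ) (hk : 4 ≤ k) (hw : (k + 1) * (L + 1) ≤ w) : ∃ C : ℕ, ∀ (n : ℕ)
    (E : Finset (Finset (Fin n))), (∀ A ∈ E, A.card = k) → ¬ ContainsLinearPath k L E →
    (E.filter (fun F => ¬ StarLP w E F)).card ≤ C * n ^ (k - 2) := by
  obtain ⟨C, hC⟩ := homogLP w k (by omega) (L + 2)
  refine ⟨k ^ k * C, fun n E hE hfree => ?_⟩
  by_contra hlt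
  push Not at hlt
  have : Nonempty (Fin k) := ⟨⟨0, by omega⟩⟩
  have hg : ∀ F : Finset (Fin n), ∃ g : Fin n → Fin k, F.card = k → Set.InjOn g F := by
    intro F
    by_cases hF : F.card = k
    · have e := F.equivFinOfCardEq hF
      refine ⟨fun v => if h : v ∈ F then e ⟨v, h⟩ else ⟨0, by omega⟩, fun _ => ?_⟩
      intro a ha b hb hab
      simp only [mem_coe] at ha hb
      simp only [ha, hb, dif_pos] at hab
      simpa using e.injective hab
    · exact ⟨fun _ => ⟨0, by omega⟩, fun h => absurd h hF⟩
  choose g hg using hg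
  obtain ⟨c, hc⟩ := colorLP (E.filter (fun F => ¬ StarLP w E F)) k (fun F => F) g
    (fun F hF => (hE F (mem_filter.1 hF).1).le)
  rw [Fintype.card_fin] at hc
  set G0 := (E.filter (fun F => ¬ StarLP w E F)).filter (fun F => ∀ v ∈ F, c v = g F v) with hG0
  have hG0E : G0 ⊆ E := (filter_subset _ _).trans (filter_subset _ _)
  have hinj : ∀ F ∈ G0, Set.InjOn c F := by
    intro F hF a ha b hb hab
    rw [hG0, mem_filter] at hF
    rw [hF.2 a ha, hF.2 b hb] at hab
    exact hg F (hE F (mem_filter.1 hF.1).1) ha hb hab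
  have himg : ∀ F ∈ G0, F.image c = univ := by
    intro F hF
    rw [← card_eq_iff_eq_univ, card_image_of_injOn (hinj F hF), hE F (hG0E hF), Fintype.card_fin]
  have hvtx : ∀ F ∈ G0, ∀ y, ∃ v ∈ F, c v = y := by
    intro F hF y
    have : y ∈ F.image c := by rw [himg F hF]; simp
    simpa using this
  have hcard : C * n ^ (k-2) < G0.card := by
    have : k ^ k * (C * n ^ (k-2)) < k ^ k * G0.card := by
      rw [← mul_assoc]; exact lt_of_lt_of_le hlt hc
    exact lt_of_mul_lt_mul_left this (Nat.zero_le _)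
  obtain ⟨H, J, hH0, hanti, ⟨F0, hF0⟩, hH⟩ := hC n c G0 (fun A hA => hE A (hG0E hA)) hcard
  have hker : ∀ i < L + 2, ∀ F ∈ H (i+1), ∀ S ∈ J, KerLP w (H i) (F.filter (fun v => c v ∈ S)) := by
    intro i hi F hF S hS
    rw [← (hH i hi F hF).2, mem_patLP] at hS
    exact hS
  have hcl : ∀ A ∈ J, ∀ B ∈ J, A ∩ B ∈ J := by
    intro A hA B hB
    have hF2 : F0 ∈ H 2 := hanti (by omega) hF0
    have hF1 : F0 ∈ H 1 := hanti (by omega) hF0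
    rw [← (hH 0 (by omega) F0 hF1).2, mem_patLP]
    intro W hW
    obtain ⟨F1, h1, h2, h3⟩ := hker 1 (by omega) F0 hF2 A hA W hW
    obtain ⟨F2, h4, h5, h6⟩ := hker 0 (by omega) F1 h1 B hB W hW
    refine ⟨F2, h4, ?_, ?_⟩
    · intro v hv
      simp only [mem_filter, mem_inter] at hv
      apply h5
      rw [mem_filter]
      exact ⟨h2 (mem_filter.2 ⟨hv.1, hv.2.1⟩), hv.2.2⟩
    · intro v hv
      have a1 := mem_filter.1 (h6 hv)
      have a2 := mem_filter.1 (h3 (mem_inter.2 ⟨a1.1, (mem_inter.1 hv).2⟩))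
      simp only [mem_filter, mem_inter]
      exact ⟨a2.1, a2.2, a1.2⟩
  have hcov : ∀ A : Finset (Fin k), A.card = k - 2 → ∃ A', A ⊆ A' ∧ A' ≠ univ ∧ A' ∈ J := by
    intro A hA
    have hF1 : F0 ∈ H 1 := hanti (by omega) hF0
    have hF0G : F0 ∈ G0 := hH0 _ hF0
    have hfc : ∀ S : Finset (Fin k), (F0.filter (fun v => c v ∈ S)).card = S.card := by
      intro S
      rw [← card_image_of_injOn (f := c) ((hinj F0 hF0G).mono (by intro x; simp; tauto))]
      congr 1
      ext y
      simp only [mem_image, mem_filter]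
      constructor
      · rintro ⟨v, hv, rfl⟩; exact hv.2
      · intro hy
        obtain ⟨v, hv, rfl⟩ := hvtx F0 hF0G y
        exact ⟨v, ⟨hv, hy⟩, rfl⟩
    obtain ⟨A', a1, a2, a3, a4⟩ := (hH 0 (by omega) F0 hF1).1 _ (filter_subset (fun v => c v ∈ A) _)
      ((hfc A).trans hA)
    have e : F0.filter (fun v => c v ∈ A'.image c) = A' := by
      ext u
      simp only [mem_filter, mem_image]
      constructor
      · rintro ⟨hu, v, hv, hvu⟩
        rw [← hinj F0 hF0G (a2 hv) hu hvu]; exact hv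
      · intro hu; exact ⟨a2 hu, u, hu, rfl⟩
    refine ⟨A'.image c, ?_, ?_, ?_⟩
    · intro y hy
      obtain ⟨v, hv, rfl⟩ := hvtx F0 hF0G y
      exact mem_image_of_mem c (a1 (mem_filter.2 ⟨hv, hy⟩))
    · intro h
      have := congrArg card h
      rw [card_univ, Fintype.card_fin] at this
      have := card_image_le (s := A') (f := c)
      omega
    · rw [← (hH 0 (by omega) F0 hF1).2, mem_patLP, e]
      exact a4
  rcases closureLP hk J hcl hcov with ⟨x, hx⟩ | ⟨y1, y2, hy, hy1, hy2⟩
  · -- star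
    have hF0G : F0 ∈ G0 := hH0 _ hF0
    have hns : ¬ StarLP w E F0 := (mem_filter.1 (mem_filter.1 hF0G).1).2
    apply hns
    obtain ⟨v, hv, hcv⟩ := hvtx F0 hF0G x
    refine ⟨v, hv, fun b hb hbv => ?_⟩
    have hcb : c b ≠ x := by
      intro h; exact hbv (hinj F0 hF0G hb hv (h.trans hcv.symm))
    have h := hker (L+1) (by omega) F0 hF0 _ (hx (c b) hcb)
    have e : F0.filter (fun u => c u ∈ ({x, c b} : Finset (Fin k))) = {v, b} := by
      ext u
      simp only [mem_filter, mem_insert, mem_singleton]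
      constructor
      · rintro ⟨hu, h | h⟩
        · left; exact hinj F0 hF0G hu hv (h.trans hcv.symm)
        · right; exact hinj F0 hF0G hu hb h
      · rintro (rfl | rfl)
        · exact ⟨hv, Or.inl hcv⟩
        · exact ⟨hb, Or.inr rfl⟩
    rw [e] at h
    exact h.mono ((hH0 _).trans hG0E)
  · -- walk
    apply hfree
    have hne : (H L).Nonempty := ⟨F0, hanti (by omega) hF0⟩
    refine walkLP (by omega) hE hw H (fun i => (hH0 i).trans hG0E) c y1 y2 hy hne
      (fun i _ F hF => hvtx F (hH0 _ hF) _) (fun i _ F hF => hvtx F (hH0 _ hF) _) ?_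
    intro i hi F hF v hv hcv
    have e : F.filter (fun u => c u ∈ ({c v} : Finset (Fin k))) = {v} := by
      ext u
      simp only [mem_filter, mem_singleton]
      constructor
      · rintro ⟨hu, h⟩
        exact hinj F (hH0 _ hF) hu hv h
      · rintro rfl; exact ⟨hv, rfl⟩
    rw [← e]
    apply hker i (by omega) F hF
    rcases hcv with h | h <;> rw [h] <;> assumption

open Classical in
lemma lemmaB (k t w : ℕ) (hk : 4 ≤ k) (hw : (k + 1) * (2 * t + 2 + 1) ≤ w) : ∃ C : ℕ, ∀ (n : ℕ)
    (E : Finset (Finset (Fin n))), (∀ A ∈ E, A.card = k) → ¬ ContainsLinearPath k (2 * t + 2) E →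
    (E.filter (fun F => StarLP w E F)).card ≤ t * n.choose (k - 1) + C * n ^ (k - 2) := by
  obtain ⟨C, hC⟩ := chainLP w k (by omega) (t + 1)
  refine ⟨2 ^ (k + t + 1) * C, fun n E hE hfree => ?_⟩
  set E1 := E.filter (fun F => StarLP w E F) with hE1
  have hx : ∀ F : Finset (Fin n), F ∈ E1 → ∃ x, x ∈ F ∧ ∀ b ∈ F, b ≠ x → KerLP w E {x, b} := by
    intro F hF
    obtain ⟨x, h⟩ := (mem_filter.1 hF).2
    exact ⟨x, h⟩
  rcases Nat.eq_zero_or_pos n with hn | hn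
  · subst hn
    have : E1 = ∅ := by
      rw [← not_nonempty_iff_eq_empty]
      rintro ⟨F, hF⟩
      obtain ⟨x, -⟩ := hx F hF
      exact x.elim0
    simp [this]
  have : Nonempty (Fin n) := ⟨⟨0, hn⟩⟩
  choose! x hxm hxk using hx
  set Bf : Finset (Fin n) → Finset (Fin n) := fun F => F.erase (x F) with hBf
  have hins : ∀ F ∈ E1, insert (x F) (Bf F) = F := fun F hF => insert_erase (hxm F hF)
  set Hh := E1.filter (fun F => t + 1 ≤ (E1.filter (fun F' => Bf F' = Bf F)).card) with hHh
  have hlow : (E1.filter (fun F => ¬ t + 1 ≤ (E1.filter (fun F' => Bf F' = Bf F)).card)).card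
      ≤ t * n.choose (k - 1) := by
    set Lo := E1.filter (fun F => ¬ t + 1 ≤ (E1.filter (fun F' => Bf F' = Bf F)).card) with hLo
    have h1 : Lo.card ≤ t * (powersetCard (k-1) (univ : Finset (Fin n))).card := by
      apply card_le_mul_card_image_of_maps_to (f := Bf)
      · intro F hF
        rw [hLo, mem_filter] at hF
        rw [mem_powersetCard]
        refine ⟨subset_univ _, ?_⟩
        rw [hBf]
        simp only
        rw [card_erase_of_mem (hxm F hF.1), hE F (mem_filter.1 hF.1).1]
      · intro B hB
        rcases (Lo.filter (fun F => Bf F = B)).eq_empty_or_nonempty with he | ⟨F, hF⟩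
        · rw [he]; simp
        · rw [mem_filter] at hF
          obtain ⟨hF, hFB⟩ := hF
          rw [hLo, mem_filter] at hF
          rw [hFB] at hF
          have : (Lo.filter (fun F => Bf F = B)).card ≤ (E1.filter (fun F => Bf F = B)).card :=
            card_le_card (filter_subset_filter _ (filter_subset _ _))
          omega
    rwa [card_powersetCard, card_univ, Fintype.card_fin] at h1
  have hsplit : Hh.card + (E1.filter (fun F => ¬ t + 1 ≤ (E1.filter (fun F' => Bf F' = Bf F)).card)).card
      = E1.card := card_filter_add_card_filter_not _
  suffices hhigh : Hh.card ≤ 2 ^ (k + t + 1) * C * n ^ (k-2) by omega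
  by_contra hlt
  push Not at hlt
  have hX : ∀ F, F ∈ Hh → ∃ X : Finset (Fin n), X.card = t + 1 ∧ ∀ y ∈ X, y ∉ Bf F ∧
      ∀ b ∈ Bf F, KerLP w E {y, b} := by
    intro F hF
    rw [hHh, mem_filter] at hF
    have hc : ((E1.filter (fun F' => Bf F' = Bf F)).image x).card =
        (E1.filter (fun F' => Bf F' = Bf F)).card := by
      apply card_image_of_injOn
      intro F1 h1 F2 h2 h12
      simp only [coe_filter, Set.mem_ofPred_eq] at h1 h2
      rw [← hins F1 h1.1, ← hins F2 h2.1, h1.2, h2.2, h12]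
    obtain ⟨X, hXs, hXc⟩ := exists_subset_card_eq (hF.2.trans hc.ge)
    refine ⟨X, hXc, fun y hy => ?_⟩
    obtain ⟨F', hF', rfl⟩ := mem_image.1 (hXs hy)
    rw [mem_filter] at hF'
    rw [← hF'.2]
    refine ⟨notMem_erase _ _, fun b hb => ?_⟩
    exact hxk F' hF'.1 b (mem_of_mem_erase hb) (ne_of_mem_erase hb)
  choose! X hXc hXp using hX
  have hHE1 : Hh ⊆ E1 := filter_subset _ _
  have hE1E : E1 ⊆ E := filter_subset _ _
  obtain ⟨c, hc⟩ := colorLP Hh (α := Bool) (k + t + 1) (fun F => F ∪ X F)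
    (fun F v => decide (v ∉ Bf F)) (by
      intro F hF
      have := card_union_le F (X F)
      rw [hXc F hF, hE F (hE1E (hHE1 hF))] at this
      simpa [add_assoc] using this)
  rw [Fintype.card_bool] at hc
  set G0 := Hh.filter (fun F => ∀ v ∈ F ∪ X F, c v = decide (v ∉ Bf F)) with hG0
  have hG0H : G0 ⊆ Hh := filter_subset _ _
  have hG0E : G0 ⊆ E := hG0H.trans (hHE1.trans hE1E)
  have hcol : ∀ F ∈ G0, ∀ v ∈ F ∪ X F, (c v = true ↔ v ∉ Bf F) := by
    intro F hF v hv
    rw [(mem_filter.1 hF).2 v hv]; simp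
  have hcard : C * n ^ (k-2) < G0.card := by
    have : 2 ^ (k + t + 1) * (C * n ^ (k-2)) < 2 ^ (k + t + 1) * G0.card := by
      rw [← mul_assoc]; exact lt_of_lt_of_le hlt hc
    exact lt_of_mul_lt_mul_left this (Nat.zero_le _)
  obtain ⟨G, g0, ganti, ⟨F0, hF0⟩, gp⟩ := hC n (fun _ => ⟨0, by omega⟩) G0
    (fun A hA => hE A (hG0E hA)) hcard
  have hGG0 : ∀ i, G i ⊆ G0 := fun i => by rw [← g0]; exact ganti (Nat.zero_le _)
  have main : ∀ m ≤ t + 1, ∃ (b : Fin n) (l : List (Fin n)), l.length = 2 * m ∧ (b :: l).Nodup ∧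
      List.IsChain (fun a b => KerLP w E {a, b}) (b :: l) ∧
      ((b :: l).filter (fun v => c v)).length ≤ m ∧ ∃ F ∈ G (t + 1 - m), b ∈ Bf F := by
    intro m
    induction m with
    | zero =>
      intro _
      have hF0E : F0 ∈ E1 := hHE1 (hG0H (hGG0 _ hF0))
      have hcB : (Bf F0).card = k - 1 := by
        rw [hBf]; simp only
        rw [card_erase_of_mem (hxm F0 hF0E), hE F0 (hE1E hF0E)]
      obtain ⟨b, hb⟩ : (Bf F0).Nonempty := by rw [← card_pos]; omega
      have hcb : c b ≠ true := by
        intro h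
        exact ((hcol F0 (hGG0 _ hF0) b (mem_union_left _ (mem_of_mem_erase hb))).1 h) hb
      exact ⟨b, [], rfl, by simp, by simp, by simp [hcb], F0, by simpa using hF0, hb⟩
    | succ m ih =>
      intro hm
      obtain ⟨b, l, l1, l2, l3, l4, F, hF, hb⟩ := ih (by omega)
      have e : t + 1 - m = (t + 1 - (m+1)) + 1 := by omega
      have hFG0 := hGG0 _ hF
      have hFE1 := hHE1 (hG0H hFG0)
      have hbF : b ∈ F := mem_of_mem_erase hb
      have hbx : b ≠ x F := ne_of_mem_erase hb
      have hcb : c b = false := by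
        have := (hcol F hFG0 b (mem_union_left _ hbF))
        by_contra h
        simp only [Bool.not_eq_false] at h
        exact this.1 h hb
      have hcx : c (x F) = true :=
        (hcol F hFG0 _ (mem_union_left _ (hxm F hFE1))).2 (notMem_erase _ _)
      obtain ⟨A, hA1, hA2, hA3⟩ := exists_subsuperset_card_eq (s := {x F, b}) (t := F) (n := k - 2)
        (by intro v; simp; rintro (rfl | rfl); exacts [hxm F hFE1, hbF])
        (by rw [card_pair hbx.symm]; omega) (by rw [hE F (hE1E hFE1)]; omega)
      rw [e] at hF
      obtain ⟨A', a1, a2, a3, a4⟩ := (gp _ F hF).1 A hA2 hA3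
      obtain ⟨F', f1, f2, f3⟩ := a4 ((b :: l).toFinset) (by
        refine (List.toFinset_card_le _).trans ?_
        simp only [List.length_cons]
        nlinarith)
      have hF'G0 := hGG0 _ f1
      have hF'E1 := hHE1 (hG0H hF'G0)
      have hxF' : x F ∈ F' := f2 (a1 (hA1 (by simp)))
      have hbF' : b ∈ F' := f2 (a1 (hA1 (by simp)))
      obtain ⟨b', hb', hb'A⟩ : ∃ b' ∈ F', b' ∉ A' := by
        by_contra h
        push Not at h
        have := card_le_card (show F' ⊆ A' from h)
        rw [hE F' (hE1E hF'E1)] at this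
        omega
      have hb'l : b' ∉ b :: l := by
        intro h
        exact hb'A (f3 (mem_inter.2 ⟨hb', by simpa using h⟩))
      have hxx : x F = x F' := by
        by_contra h
        exact (hcol F' hF'G0 _ (mem_union_left _ hxF')).1 hcx (mem_erase.2 ⟨h, hxF'⟩)
      have hbB : b ∈ Bf F' := mem_erase.2 ⟨by rw [← hxx]; exact hbx, hbF'⟩
      have hb'B : b' ∈ Bf F' := by
        refine mem_erase.2 ⟨?_, hb'⟩
        rw [← hxx]; rintro rfl
        exact hb'A (a1 (hA1 (by simp)))
      have hcb' : c b' = false := by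
        have := (hcol F' hF'G0 b' (mem_union_left _ hb'))
        by_contra h
        simp only [Bool.not_eq_false] at h
        exact this.1 h hb'B
      obtain ⟨y, hyX, hyl⟩ : ∃ y ∈ X F', y ∉ ((b :: l).filter (fun v => c v)).toFinset := by
        by_contra h
        push Not at h
        have h1 := card_le_card (show X F' ⊆ _ from h)
        rw [hXc F' (hG0H hF'G0)] at h1
        have h2 := List.toFinset_card_le ((b :: l).filter (fun v => c v))
        omega
      obtain ⟨hyB, hyk⟩ := hXp F' (hG0H hF'G0) y hyX
      have hcy : c y = true := (hcol F' hF'G0 y (mem_union_right _ hyX)).2 hyB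
      have hyl' : y ∉ b :: l := by
        intro h
        apply hyl
        rw [List.mem_toFinset, List.mem_filter]
        exact ⟨h, hcy⟩
      refine ⟨b', y :: b :: l, by simp [l1]; ring, ?_, ?_, ?_, F', f1, hb'B⟩
      · rw [List.nodup_cons, List.nodup_cons]
        refine ⟨?_, hyl', l2⟩
        intro h
        rcases List.mem_cons.1 h with h | h
        · rw [h, hcy] at hcb'; simp at hcb'
        · exact hb'l h
      · rw [List.isChain_cons_cons, List.isChain_cons_cons]
        refine ⟨?_, hyk b hbB, l3⟩
        rw [pair_comm]
        exact hyk b' hb'B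
      · rw [List.filter_cons_of_neg (by simp [hcb']), List.filter_cons_of_pos (by simp [hcy])]
        simp only [List.length_cons]
        omega
  obtain ⟨b, l, l1, l2, l3, -⟩ := main (t+1) le_rfl
  exact hfree (kerpathLP (by omega) hE hw l b (by rw [l1]; ring) l2 l3)

lemma prefixLP {k ℓ n : ℕ} {F : Finset (Finset (Fin n))} (h : ContainsLinearPath k (ℓ + 1) F) :
    ContainsLinearPath k ℓ F := by
  obtain ⟨P, h1, h2, h3, h4, h5⟩ := h
  refine ⟨fun i => P i.castSucc, ?_, fun i => h2 _, fun i => h3 _, fun i j h => h4 _ _ (by simpa using h),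
    fun i j h => h5 _ _ (by simpa using h)⟩
  intro i j hij
  exact Fin.castSucc_injective _ (h1 hij)

lemma bddLP (k ℓ n : ℕ) : BddAbove {m : ℕ | ∃ F : Finset (Finset (Fin n)),
    (∀ A ∈ F, A.card = k) ∧ ¬ ContainsLinearPath k ℓ F ∧ F.card = m} := by
  refine ⟨Fintype.card (Finset (Fin n)), ?_⟩
  rintro m ⟨F, -, -, rfl⟩
  exact card_le_univ _

lemma nonemptyLP (k ℓ n : ℕ) (hl : 1 ≤ ℓ) : {m : ℕ | ∃ F : Finset (Finset (Fin n)),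
    (∀ A ∈ F, A.card = k) ∧ ¬ ContainsLinearPath k ℓ F ∧ F.card = m}.Nonempty := by
  refine ⟨0, ∅, by simp, ?_, rfl⟩
  rintro ⟨P, -, h, -⟩
  simpa using h ⟨0, hl⟩

/-- Theorem 4.5 (asymptotic bound): for k ≥ 4 and t ≥ 1 there is a constant C such that
for every positive n, ex_k(n, P^{(k)}_{2t+1}) ≤ ex_k(n, P^{(k)}_{2t+2})
≤ t·C(n-1,k-1) + C·n^{k-2}. -/
theorem turan_linear_path_asymptotic (k t : ℕ) (hk : 4 ≤ k) (ht : 1 ≤ t) :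
    ∃ C : ℝ, 0 < C ∧ ∀ n : ℕ, 0 < n →
      exLinear k (2 * t + 1) n ≤ exLinear k (2 * t + 2) n ∧
      (exLinear k (2 * t + 2) n : ℝ) ≤
        t * ((n - 1).choose (k - 1)) + C * (n : ℝ) ^ (k - 2) := by
  obtain ⟨CA, hCA⟩ := lemmaA k (2 * t + 2) ((k + 1) * (2 * t + 2 + 1)) hk le_rfl
  obtain ⟨CB, hCB⟩ := lemmaB k t ((k + 1) * (2 * t + 2 + 1)) hk le_rfl
  refine ⟨(CA + CB + t + 1 : ℕ), by positivity, fun n hn => ⟨?_, ?_⟩⟩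
  · apply csSup_le_csSup (bddLP _ _ _) (nonemptyLP _ _ _ (by omega))
    rintro m ⟨F, h1, h2, h3⟩
    exact ⟨F, h1, fun h => h2 (prefixLP h), h3⟩
  · have key : exLinear k (2 * t + 2) n ≤
        t * (n - 1).choose (k - 1) + (CA + CB + t + 1) * n ^ (k - 2) := by
      apply csSup_le (nonemptyLP _ _ _ (by omega))
      rintro m ⟨E, h1, h2, rfl⟩
      classical
      have a := hCA n E h1 h2
      have b := hCB n E h1 h2
      have s := card_filter_add_card_filter_not (s := E)
        (fun F => StarLP ((k + 1) * (2 * t + 2 + 1)) E F)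
      have p : n.choose (k - 1) ≤ (n - 1).choose (k - 1) + n ^ (k - 2) := by
        obtain ⟨n, rfl⟩ : ∃ n', n = n' + 1 := ⟨n - 1, by omega⟩
        obtain ⟨k, rfl⟩ : ∃ k', k = k' + 2 := ⟨k - 2, by omega⟩
        have e : k + 2 - 1 = k + 1 := rfl
        rw [e, Nat.choose_succ_succ']
        simp only [Nat.add_sub_cancel]
        have : n.choose k ≤ (n + 1) ^ k :=
          (Nat.choose_le_pow _ _).trans (Nat.pow_le_pow_left (by omega) _)
        omega
      have p' := Nat.mul_le_mul_left t p
      have hE : E.card ≤ CA * n ^ (k-2) + (t * n.choose (k - 1) + CB * n ^ (k - 2)) := by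
        rw [← s, add_comm]
        exact Nat.add_le_add (by convert a) (by convert b)
      calc E.card ≤ _ := hE
        _ ≤ CA * n ^ (k-2) + (t * ((n - 1).choose (k - 1) + n ^ (k - 2)) + CB * n ^ (k - 2)) := by omega
        _ = t * (n - 1).choose (k - 1) + (CA + CB + t) * n ^ (k - 2) := by ring
        _ ≤ _ := Nat.add_le_add_left (Nat.mul_le_mul_right _ (by omega)) _
    calc (exLinear k (2 * t + 2) n : ℝ) ≤
        ((t * (n - 1).choose (k - 1) + (CA + CB + t + 1) * n ^ (k - 2) : ℕ) : ℝ) := by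
          exact_mod_cast key
      _ = _ := by push_cast; ring
end

section
/- Let k ≥ 2 and ℓ ≥ 1 be integers. For every positive integer n, ex_k(n, P^{(k)}_ℓ) ≤ (k−1)(ℓ−1)·C(n−1,k−1); that is, every family F ⊆ binom([n],k) with |F| > (k−1)(ℓ−1)·C(n−1,k−1) contains a copy of the k-uniform linear path of length ℓ. -/
open Finset

namespace TLP

/-- mod 2 boundary of a set -/
def bd (k : ℕ) {n : ℕ} (E : Finset (Fin n)) : Finset (Fin n) → ZMod 2 :=
  fun D => if D.card = k - 1 ∧ D ⊆ E then 1 else 0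

lemma bd_cycle {k n : ℕ} (hk : 2 ≤ k) (E : Finset (Fin n)) (hE : E.card = k)
    (S : Finset (Fin n)) (hS : S.card = k - 2) :
    ∑ y ∈ Sᶜ, bd k E (insert y S) = 0 := by
  by_cases hSE : S ⊆ E
  · have h1 : ∑ y ∈ Sᶜ, bd k E (insert y S) = ∑ y ∈ Sᶜ, if y ∈ E then (1 : ZMod 2) else 0 := by
      apply Finset.sum_congr rfl
      intro y hy
      have hy' : y ∉ S := by simpa using hy
      have hc : (insert y S).card = k - 1 := by rw [card_insert_of_notMem hy']; omega
      simp [bd, hc, insert_subset_iff, hSE]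
    rw [h1, Finset.sum_ite_mem, Finset.sum_const]
    have h2 : Sᶜ ∩ E = E \ S := by ext; simp [and_comm]
    have h3 : (E \ S).card = 2 := by rw [card_sdiff_of_subset hSE]; omega
    rw [h2, h3]
    decide
  · apply Finset.sum_eq_zero
    intro y _
    have : ¬ (insert y S ⊆ E) := fun h => hSE ((subset_insert _ _).trans h)
    simp [bd, this]

lemma span_cycle {k n : ℕ} (hk : 2 ≤ k) (F : Set (Finset (Fin n))) (hF : ∀ E ∈ F, E.card = k)
    (z : Finset (Fin n) → ZMod 2) (hz : z ∈ Submodule.span (ZMod 2) (bd k '' F)) :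
    (∀ D, D.card ≠ k - 1 → z D = 0) ∧
    ∀ S : Finset (Fin n), S.card = k - 2 → ∑ y ∈ Sᶜ, z (insert y S) = 0 := by
  induction hz using Submodule.span_induction with
  | mem x hx =>
    obtain ⟨E, hE, rfl⟩ := hx
    exact ⟨fun D hD => by simp [bd, hD], fun S hS => bd_cycle hk E (hF E hE) S hS⟩
  | zero => simp
  | add a b _ _ ha hb =>
    refine ⟨fun D hD => by simp [ha.1 D hD, hb.1 D hD], fun S hS => ?_⟩
    simp [Finset.sum_add_distrib, ha.2 S hS, hb.2 S hS]
  | smul c a _ ha =>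
    refine ⟨fun D hD => by simp [ha.1 D hD], fun S hS => ?_⟩
    simp [← Finset.mul_sum, ha.2 S hS]

lemma finrank_span_le {k n : ℕ} (hk : 2 ≤ k) (hn : 0 < n) (F : Set (Finset (Fin n)))
    (hF : ∀ E ∈ F, E.card = k) :
    Module.finrank (ZMod 2) (Submodule.span (ZMod 2) (bd k '' F)) ≤ (n - 1).choose (k - 1) := by
  let x : Fin n := ⟨0, hn⟩
  let T := powersetCard (k - 1) ((univ : Finset (Fin n)).erase x)
  let f := (LinearMap.funLeft (ZMod 2) (ZMod 2) (fun D : T => (D : Finset (Fin n)))).comp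
    (Submodule.span (ZMod 2) (bd k '' F)).subtype
  have hf : Function.Injective f := by
    rw [← LinearMap.ker_eq_bot, LinearMap.ker_eq_bot']
    rintro ⟨z, hz⟩ h
    obtain ⟨h1, h2⟩ := span_cycle hk F hF z hz
    have h0 : ∀ D : Finset (Fin n), D.card = k - 1 → x ∉ D → z D = 0 := by
      intro D hD hx
      have hDT : D ∈ T := by
        simp only [T, mem_powersetCard]
        refine ⟨fun a ha => ?_, hD⟩
        simp only [mem_erase, mem_univ, and_true]
        rintro rfl
        exact hx ha
      exact congrFun h ⟨D, hDT⟩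
    ext D
    change z D = 0
    by_cases hD : D.card = k - 1
    · by_cases hx : x ∈ D
      · have h3 := h2 (D.erase x) (by rw [card_erase_of_mem hx]; omega)
        rw [Finset.sum_eq_single x] at h3
        · rwa [insert_erase hx] at h3
        · intro y hy hyx
          simp only [mem_compl, mem_erase, not_and] at hy
          have hyD := hy hyx
          apply h0
          · rw [card_insert_of_notMem (by simp [hyD]), card_erase_of_mem hx]; omega
          · simp [Ne.symm hyx]
        · simp
      · exact h0 D hD hx
    · exact h1 D hD
  have := LinearMap.finrank_le_finrank_of_injective hf
  refine this.trans (le_of_eq ?_)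
  rw [Module.finrank_fintype_fun_eq_card, Fintype.card_coe]
  simp [T, card_powersetCard]

lemma card_le_span {k n d : ℕ} (F : Finset (Finset (Fin n)))
    (hdeg : ∀ G ⊆ F, G.Nonempty → ∃ D : Finset (Fin n), D.card = k - 1 ∧
      (∃ E ∈ G, D ⊆ E) ∧ (G.filter (fun E => D ⊆ E)).card ≤ d) :
    F.card ≤ d * Module.finrank (ZMod 2)
      (Submodule.span (ZMod 2) (bd k '' (F : Set (Finset (Fin n))))) := by
  induction F using Finset.strongInduction with
  | H F ih =>
    rcases F.eq_empty_or_nonempty with rfl | hne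
    · simp
    obtain ⟨D, hD, ⟨E, hE, hDE⟩, hcard⟩ := hdeg F subset_rfl hne
    have hsub : F.filter (fun E => ¬ D ⊆ E) ⊂ F := by
      rw [Finset.filter_ssubset]
      exact ⟨E, hE, by simpa using hDE⟩
    have h1 := ih _ hsub (fun G hG => hdeg G (hG.trans hsub.1))
    have hlt : Submodule.span (ZMod 2) (bd k '' (F.filter (fun E => ¬ D ⊆ E) : Set (Finset (Fin n))))
        < Submodule.span (ZMod 2) (bd k '' (F : Set (Finset (Fin n)))) := by
      rw [SetLike.lt_iff_le_and_exists]
      refine ⟨Submodule.span_mono (Set.image_mono (by exact_mod_cast hsub.1)), bd k E,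
        Submodule.subset_span ⟨E, hE, rfl⟩, fun hmem => ?_⟩
      have hle : Submodule.span (ZMod 2)
          (bd k '' (F.filter (fun E => ¬ D ⊆ E) : Set (Finset (Fin n)))) ≤
          LinearMap.ker (LinearMap.proj (R := ZMod 2) (φ := fun _ : Finset (Fin n) => ZMod 2) D) := by
        rw [Submodule.span_le]
        rintro _ ⟨A, hA, rfl⟩
        have hA' : ¬ D ⊆ A := by simp at hA; exact hA.2
        simp [bd, hA']
      have := hle hmem
      simp [bd, hD, hDE] at this
    have h2 := Submodule.finrank_lt_finrank_of_lt hlt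
    have h3 := Finset.card_filter_add_card_filter_not (s := F) (fun E => D ⊆ E)
    calc F.card ≤ d + d * _ := by rw [← h3]; exact add_le_add hcard h1
      _ = d * (_ + 1) := by ring
      _ ≤ _ := Nat.mul_le_mul_left d h2

lemma replace {k n d : ℕ} (F : Finset (Finset (Fin n))) (hF : ∀ A ∈ F, A.card = k)
    (hdeg : ∀ D : Finset (Fin n), D.card = k - 1 → (∃ E ∈ F, D ⊆ E) →
      d < (F.filter (fun E => D ⊆ E)).card)
    (U : Finset (Fin n)) (v : Fin n) (hv : v ∈ U) (hU : U.card ≤ d + 1)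
    (E : Finset (Fin n)) (hE : E ∈ F) (hvE : v ∈ E) :
    ∃ E' ∈ F, E' ∩ U = {v} := by
  obtain ⟨A, hA, hmin⟩ := Finset.exists_min_image (F.filter (fun E => v ∈ E))
    (fun E => (E ∩ U).card) ⟨E, by simp [hE, hvE]⟩
  rw [mem_filter] at hA
  obtain ⟨hAF, hvA⟩ := hA
  refine ⟨A, hAF, ?_⟩
  by_contra hne
  obtain ⟨u, hu, huv⟩ : ∃ u ∈ A ∩ U, u ≠ v := by
    by_contra! hcon
    exact hne (Finset.eq_singleton_iff_unique_mem.2 ⟨by simp [hvA, hv], hcon⟩)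
  rw [mem_inter] at hu
  have hDc : (A.erase u).card = k - 1 := by rw [card_erase_of_mem hu.1, hF A hAF]
  have hd := hdeg (A.erase u) hDc ⟨A, hAF, erase_subset _ _⟩
  have hkpos : 0 < k := by rw [← hF A hAF]; exact card_pos.2 ⟨v, hvA⟩
  have hex : ∃ w, w ∉ U ∧ insert w (A.erase u) ∈ F := by
    by_contra! hcon
    have hsub : F.filter (fun E => A.erase u ⊆ E) ⊆
        (U.erase v).image (fun w => insert w (A.erase u)) := by
      intro B hB
      rw [mem_filter] at hB
      have hc1 : (B \ A.erase u).card = 1 := by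
        rw [card_sdiff_of_subset hB.2, hDc, hF B hB.1]; omega
      obtain ⟨w, hw⟩ := card_eq_one.1 hc1
      have hBw : insert w (A.erase u) = B := by
        rw [insert_eq, ← hw, sdiff_union_of_subset hB.2]
      have hwm : w ∈ B \ A.erase u := by rw [hw]; simp
      rw [mem_image]
      refine ⟨w, ?_, hBw⟩
      rw [mem_erase]
      constructor
      · rintro rfl
        simp [hvA, Ne.symm huv] at hwm
      · by_contra hwU
        exact hcon w hwU (hBw ▸ hB.1)
    have := (card_le_card hsub).trans card_image_le
    rw [card_erase_of_mem hv] at this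
    omega
  obtain ⟨w, hwU, hwF⟩ := hex
  have h1 := hmin (insert w (A.erase u)) (by simp [hwF, hvA, Ne.symm huv])
  have h2 : insert w (A.erase u) ∩ U = (A ∩ U).erase u := by
    rw [insert_inter_of_notMem hwU, erase_inter]
  rw [h2] at h1
  have h3 := card_erase_lt_of_mem (mem_inter.2 hu)
  omega

lemma path {k n ℓ : ℕ} (hk : 2 ≤ k) (F : Finset (Finset (Fin n))) (hF : ∀ A ∈ F, A.card = k)
    (hne : F.Nonempty)
    (hdeg : ∀ D : Finset (Fin n), D.card = k - 1 → (∃ E ∈ F, D ⊆ E) →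
      (k - 1) * (ℓ - 1) < (F.filter (fun E => D ⊆ E)).card) (j : ℕ) (hj : j ≤ ℓ - 1) :
    ∃ (P : ℕ → Finset (Fin n)) (v : Fin n), (∀ i ≤ j, P i ∈ F) ∧
      (∀ i < j, (P i ∩ P (i + 1)).card = 1) ∧
      (∀ i i', i + 1 < i' → i' ≤ j → P i ∩ P i' = ∅) ∧ v ∈ P j ∧ (∀ i < j, v ∉ P i) ∧
      ((range (j + 1)).biUnion P).card ≤ (k - 1) * (j + 1) + 1 := by
  induction j with
  | zero =>
    obtain ⟨E, hE⟩ := hne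
    obtain ⟨v, hv⟩ : E.Nonempty := card_pos.1 (by rw [hF E hE]; omega)
    refine ⟨fun _ => E, v, by simp [hE], by simp, by intros; omega, hv, by simp, ?_⟩
    simp [hF E hE]; omega
  | succ j ih =>
    obtain ⟨P, v, h1, h2, h3, h4, h5, h6⟩ := ih (by omega)
    set U := (range (j + 1)).biUnion P with hU
    have hvU : v ∈ U := by rw [hU, mem_biUnion]; exact ⟨j, by simp, h4⟩
    have hPU : ∀ i ≤ j, P i ⊆ U := fun i hi => subset_biUnion_of_mem P (by simp; omega)
    obtain ⟨A, hA, hAU⟩ := replace F hF hdeg U v hvU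
      (h6.trans (by have := Nat.mul_le_mul_left (k - 1) hj; omega)) (P j) (h1 j le_rfl) h4
    have hvA : v ∈ A := by
      have : v ∈ A ∩ U := by rw [hAU]; simp
      exact (mem_inter.1 this).1
    have hmem : ∀ y, y ∈ A → y ∈ U → y = v := fun y ha hu => by
      have : y ∈ A ∩ U := mem_inter.2 ⟨ha, hu⟩
      rw [hAU] at this
      simpa using this
    obtain ⟨w, hwA, hwv⟩ : ∃ w ∈ A, w ≠ v :=
      exists_mem_ne (by rw [hF A hA]; omega) v
    have hwU : w ∉ U := fun h => hwv (hmem w hwA h)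
    have hold : ∀ i ≤ j, Function.update P (j + 1) A i = P i := fun i hi =>
      Function.update_of_ne (by omega) _ _
    have hnew : Function.update P (j + 1) A (j + 1) = A := Function.update_self _ _ _
    refine ⟨Function.update P (j + 1) A, w, ?_, ?_, ?_, ?_, ?_, ?_⟩
    · intro i hi
      rcases Nat.lt_or_ge j i with h | h
      · obtain rfl : i = j + 1 := by omega
        rwa [hnew]
      · rw [hold i h]; exact h1 i h
    · intro i hi
      rcases Nat.lt_or_ge i j with h | h
      · rw [hold i (by omega), hold (i + 1) (by omega)]; exact h2 i h
      · obtain rfl : i = j := by omega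
        rw [hold i le_rfl, hnew, card_eq_one]
        refine ⟨v, Finset.eq_singleton_iff_unique_mem.2 ⟨mem_inter.2 ⟨h4, hvA⟩, ?_⟩⟩
        intro y hy
        rw [mem_inter] at hy
        exact hmem y hy.2 (hPU i le_rfl hy.1)
    · intro i i' hi hi'
      rcases Nat.lt_or_ge j i' with h | h
      · obtain rfl : i' = j + 1 := by omega
        rw [hold i (by omega), hnew, Finset.eq_empty_iff_forall_notMem]
        intro y hy
        rw [mem_inter] at hy
        have := hmem y hy.2 (hPU i (by omega) hy.1)
        exact h5 i (by omega) (this ▸ hy.1)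
      · rw [hold i (by omega), hold i' h]; exact h3 i i' hi h
    · rwa [hnew]
    · intro i hi
      rw [hold i (by omega)]
      exact fun h => hwU (hPU i (by omega) h)
    · have hsub : (range (j + 1 + 1)).biUnion (Function.update P (j + 1) A) ⊆ U ∪ A.erase v := by
        intro y hy
        rw [mem_biUnion] at hy
        obtain ⟨i, hi, hy⟩ := hy
        rw [mem_range] at hi
        rw [mem_union]
        rcases Nat.lt_or_ge j i with h | h
        · obtain rfl : i = j + 1 := by omega
          rw [hnew] at hy
          by_cases hyv : y = v
          · left; rwa [hyv]
          · right; simp [hy, hyv]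
        · rw [hold i h] at hy
          left; exact hPU i h hy
      have h7 := (card_le_card hsub).trans (card_union_le _ _)
      rw [card_erase_of_mem hvA, hF A hA] at h7
      have : (k - 1) * (j + 1 + 1) = (k - 1) * (j + 1) + (k - 1) := by ring
      omega

lemma contains {k n ℓ : ℕ} (hk : 2 ≤ k) (hl : 1 ≤ ℓ) (F : Finset (Finset (Fin n)))
    (hF : ∀ A ∈ F, A.card = k) (hne : F.Nonempty)
    (hdeg : ∀ D : Finset (Fin n), D.card = k - 1 → (∃ E ∈ F, D ⊆ E) →
      (k - 1) * (ℓ - 1) < (F.filter (fun E => D ⊆ E)).card) : ContainsLinearPath k ℓ F := by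
  obtain ⟨P, v, h1, h2, h3, -⟩ := path hk F hF hne hdeg (ℓ - 1) le_rfl
  have key : ∀ i i' : Fin ℓ, (i : ℕ) < i' → P i ≠ P i' := by
    intro i i' hlt heq
    have hc := hF _ (h1 i (by omega))
    rcases Nat.lt_or_ge (i + 1) i' with h | h
    · have := h3 i i' h (by omega)
      rw [← heq, inter_self] at this
      rw [this] at hc
      simp at hc; omega
    · have := h2 i (by omega)
      rw [show (i : ℕ) + 1 = i' by omega, ← heq, inter_self] at this
      omega
  refine ⟨fun i => P i, ?_, fun i => h1 i (by omega), fun i => hF _ (h1 i (by omega)), ?_, ?_⟩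
  · intro i i' h
    rcases lt_trichotomy (i : ℕ) i' with hlt | heq | hlt
    · exact absurd h (key _ _ hlt)
    · exact Fin.ext heq
    · exact absurd h.symm (key _ _ hlt)
  · intro i i' h
    have := h2 i (by omega)
    rwa [h] at this
  · intro i i' h
    exact h3 i i' h (by omega)

lemma bound {k n ℓ : ℕ} (hk : 2 ≤ k) (hl : 1 ≤ ℓ) (hn : 0 < n) (F : Finset (Finset (Fin n)))
    (hF : ∀ A ∈ F, A.card = k) (hnc : ¬ ContainsLinearPath k ℓ F) :
    F.card ≤ (k - 1) * (ℓ - 1) * ((n - 1).choose (k - 1)) := by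
  refine (card_le_span (k := k) (d := (k - 1) * (ℓ - 1)) F ?_).trans
    (Nat.mul_le_mul_left _ (finrank_span_le hk hn _ (by simpa using hF)))
  intro G hG hne
  by_contra! hcon
  obtain ⟨P, hP, hPG, hrest⟩ := contains hk hl G (fun A hA => hF A (hG hA)) hne
    (fun D hD hE => hcon D hD hE)
  exact hnc ⟨P, hP, fun i => hG (hPG i), hrest⟩

end TLP

theorem turan_linear_path_all_n (k ℓ : ℕ) (hk : 2 ≤ k) (hl : 1 ≤ ℓ) (n : ℕ) (hn : 0 < n) :
    exLinear k ℓ n ≤ (k - 1) * (ℓ - 1) * ((n - 1).choose (k - 1)) ∧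
    ∀ F : Finset (Finset (Fin n)), (∀ A ∈ F, A.card = k) →
      (k - 1) * (ℓ - 1) * ((n - 1).choose (k - 1)) < F.card →
      ContainsLinearPath k ℓ F := by
  constructor
  · refine csSup_le' ?_
    rintro m ⟨F, hF, hnc, rfl⟩
    exact TLP.bound hk hl hn F hF hnc
  · intro F hF hlt
    by_contra hnc
    exact absurd (TLP.bound hk hl hn F hF hnc) (by omega)
end
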